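/- Let n ≥ 2, let 1 ≤ k ≤ n−1, and let f₁, f₂ ∈ Q₀ⁿ. Assume the Milman condition: ‖P_H f₁‖_{L¹(H)} ≤ ∫_H f₂ dλ_H for every k-dimensional linear subspace H ⊆ ℝⁿ. Then ‖f₁‖_{n/k} ≤ ‖f₂‖₁^{k/n} · ‖f₂‖_∞^{(n−k)/n}. -/

import Mathlib

open MeasureTheory

noncomputable section

/-- `ℝⁿ` with its Euclidean structure. -/
abbrev Eucl (n : ℕ) := EuclideanSpace ℝ (Fin n)

/-- `f : ℝⁿ → [0,∞)` is log-concave: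
`f(tx+(1−t)y) ≥ f(x)^t · f(y)^(1−t)` for all `x, y` and `t ∈ (0,1)`. -/
def IsLogConcave {n : ℕ} (f : Eucl n → ℝ) : Prop :=
  ∀ x y : Eucl n, ∀ t : ℝ, 0 < t → t < 1 →
    f x ^ t * f y ^ (1 - t) ≤ f (t • x + (1 - t) • y)

/-- The class `Q₀ⁿ`: nonnegative, log-concave, upper semicontinuous, integrable
functions with positive integral. -/
def MemQ0 {n : ℕ} (f : Eucl n → ℝ) : Prop :=
  (∀ x, 0 ≤ f x) ∧ IsLogConcave f ∧ UpperSemicontinuous f ∧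
    Integrable f ∧ 0 < ∫ x, f x

/-- `‖f‖_∞ = sup f`. -/
def supNorm {n : ℕ} (f : Eucl n → ℝ) : ℝ := ⨆ x, f x

/-- `‖f‖_p = (∫ f^p)^(1/p)`. -/
def lpNorm {n : ℕ} (p : ℝ) (f : Eucl n → ℝ) : ℝ := (∫ x, f x ^ p) ^ (1 / p)

/-- `‖P_H f‖_{L¹(H)} = ∫_H sup_{z ∈ H⊥} f(y+z) dλ_H(y)`, the `L¹(H)`-norm of the
projection of `f` onto the subspace `H` (with the Lebesgue measure on `H` induced
by the Euclidean structure). -/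
def projL1 {n : ℕ} (f : Eucl n → ℝ) (H : Submodule ℝ (Eucl n)) : ℝ :=
  ∫ y : H, ⨆ z : Hᗮ, f ((y : Eucl n) + (z : Eucl n))

/-- `‖S_H f‖_{L¹(H)} = ∫_H f dλ_H`, the integral of the section `f|_H`. -/
def sectL1 {n : ℕ} (f : Eucl n → ℝ) (H : Submodule ℝ (Eucl n)) : ℝ :=
  ∫ y : H, f (y : Eucl n)

/-!
A convex body `K` and a zonotope `Z = ∑ [-vᵢ, vᵢ]` in dimension `d + 1` satisfy, by
Brunn–Minkowski, the isoperimetric inequality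
`(d + 1) |K|^{d/(d+1)} |Z|^{1/(d+1)} ≤ ∑ 2‖vᵢ‖ |P_{vᵢ^⊥} K|`.
Applied to the superlevel sets of a quasiconcave `f₁` and integrated over the levels, it bounds
`‖f₁‖_{(d+1)/d}` by integrals of projections of `f₁` to hyperplanes, hence of sections of `f₂`.
Averaging over the rotations of a zonotope close to a ball replaces `f₂` by its rotation average,
whose hyperplane integral the bathtub principle bounds in terms of `‖f₂‖₁` and `‖f₂‖_∞`. Balls
give equality in both steps, so the constants cancel. Subspaces of higher codimension follow by
induction, applying the hyperplane inequality to powers of `f₁`.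
-/

open Set Module Filter Metric
open scoped ENNReal Pointwise Topology

/-! ### The Prékopa–Leindler and Brunn–Minkowski inequalities -/

theorem lintegral_indicator_ofReal_lt (c : ℝ≥0∞) :
    ∫⁻ t in Ioi (0 : ℝ), {t | ENNReal.ofReal t < c}.indicator 1 t = c := by
  have hmeas : MeasurableSet {t : ℝ | ENNReal.ofReal t < c} :=
    measurableSet_lt ENNReal.measurable_ofReal measurable_const
  rw [lintegral_indicator_one hmeas, Measure.restrict_apply hmeas]
  rcases eq_or_ne c ∞ with rfl | hc
  · simp
  · have hset : {t : ℝ | ENNReal.ofReal t < c} ∩ Ioi 0 = Ioo 0 c.toReal := by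
      ext t
      exact ⟨fun ⟨h, h0⟩ ↦ ⟨h0, (ENNReal.ofReal_lt_iff_lt_toReal (le_of_lt h0) hc).1 h⟩,
        fun ⟨h0, h⟩ ↦ ⟨(ENNReal.ofReal_lt_iff_lt_toReal h0.le hc).2 h, h0⟩⟩
    simp [hset, ENNReal.ofReal_toReal hc]

theorem lintegral_eq_lintegral_meas_ofReal_lt {α : Type*} [MeasurableSpace α] (μ : Measure α)
    [SFinite μ] {f : α → ℝ≥0∞} (hf : AEMeasurable f μ) :
    ∫⁻ x, f x ∂μ = ∫⁻ t in Ioi (0 : ℝ), μ {x | ENNReal.ofReal t < f x} := by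
  calc ∫⁻ x, f x ∂μ
      = ∫⁻ x, (∫⁻ t in Ioi (0 : ℝ), {t | ENNReal.ofReal t < f x}.indicator 1 t) ∂μ :=
        lintegral_congr fun x ↦ (lintegral_indicator_ofReal_lt (f x)).symm
    _ = ∫⁻ t in Ioi (0 : ℝ), ∫⁻ x, {x | ENNReal.ofReal t < f x}.indicator 1 x ∂μ := by
        refine lintegral_lintegral_swap ?_
        exact (aemeasurable_const (b := (1 : ℝ≥0∞))).indicator₀ <|
          nullMeasurableSet_lt (ENNReal.measurable_ofReal.comp measurable_snd).aemeasurable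
            hf.comp_fst
    _ = _ := lintegral_congr fun t ↦
      lintegral_indicator_one₀ (nullMeasurableSet_lt aemeasurable_const hf)

theorem antitone_meas_ofReal_lt {α : Type*} [MeasurableSpace α] (μ : Measure α) (f : α → ℝ≥0∞) :
    Antitone fun t : ℝ ↦ μ {x | ENNReal.ofReal t < f x} :=
  fun _ _ hst ↦ measure_mono fun _ hx ↦ (ENNReal.ofReal_le_ofReal hst).trans_lt hx

-- The translates `A + min B` and `max A + B` lie in `A + B` and overlap in a single point.
theorem volume_add_volume_le_volume_add_of_isCompact {A B : Set ℝ} (hA : IsCompact A)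
    (hB : IsCompact B) (hA0 : A.Nonempty) (hB0 : B.Nonempty) :
    volume A + volume B ≤ volume (A + B) := by
  obtain ⟨p, hpA, hp⟩ := hA.exists_isGreatest hA0
  obtain ⟨q, hqB, hq⟩ := hB.exists_isLeast hB0
  have hoverlap : volume ((A + {q}) ∩ ({p} + B)) = 0 := by
    refine measure_mono_null (t := {p + q}) ?_ (by simp)
    rintro x ⟨⟨a, ha, _, rfl, rfl⟩, ⟨_, rfl, b, hb, hab⟩⟩
    have := hp ha
    have := hq hb
    simp only [mem_singleton_iff] at *
    linarith
  calc volume A + volume B = volume (A + {q}) + volume ({p} + B) := by simp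
    _ = volume ((A + {q}) ∪ ({p} + B)) :=
        (measure_union₀ (isCompact_singleton.add hB).measurableSet.nullMeasurableSet hoverlap).symm
    _ ≤ volume (A + B) := measure_mono <| union_subset
        (add_subset_add_left (singleton_subset_iff.2 hqB))
        (add_subset_add_right (singleton_subset_iff.2 hpA))

theorem volume_add_volume_le_volume_add {A B : Set ℝ} (hA : MeasurableSet A)
    (hB : MeasurableSet B) (hA0 : A.Nonempty) (hB0 : B.Nonempty) :
    volume A + volume B ≤ volume (A + B) := by
  obtain ⟨p, hp⟩ := hA0
  obtain ⟨q, hq⟩ := hB0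
  have hcompact {K L : Set ℝ} (hK : K ⊆ A ∧ IsCompact K) (hL : L ⊆ B ∧ IsCompact L) :
      volume K + volume L ≤ volume (A + B) :=
    calc volume K + volume L ≤ volume (insert p K) + volume (insert q L) := by
          gcongr <;> exact subset_insert _ _
      _ ≤ volume (insert p K + insert q L) :=
          volume_add_volume_le_volume_add_of_isCompact (hK.2.insert p) (hL.2.insert q)
            (insert_nonempty p K) (insert_nonempty q L)
      _ ≤ volume (A + B) := measure_mono <|
          add_subset_add (insert_subset hp hK.1) (insert_subset hq hL.1)
  rw [hA.measure_eq_iSup_isCompact, hB.measure_eq_iSup_isCompact]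
  simp only [iSup_and']
  exact ENNReal.biSup_add_biSup_le' ⟨∅, empty_subset A, isCompact_empty⟩
    ⟨∅, empty_subset B, isCompact_empty⟩ fun K hK L hL ↦ hcompact hK hL

theorem geom_mean_le_arith_mean2_weighted_ennreal {a b : ℝ} (ha : 0 < a) (hb : 0 < b)
    (hab : a + b = 1) (x y : ℝ≥0∞) :
    x ^ a * y ^ b ≤ ENNReal.ofReal a * x + ENNReal.ofReal b * y := by
  rcases eq_or_ne x ∞ with rfl | hx
  · simp [ENNReal.mul_top, ha]
  rcases eq_or_ne y ∞ with rfl | hy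
  · simp [ENNReal.mul_top, hb]
  lift x to NNReal using hx
  lift y to NNReal using hy
  lift a to NNReal using ha.le
  lift b to NNReal using hb.le
  rw [← ENNReal.coe_rpow_of_nonneg _ ha.le, ← ENNReal.coe_rpow_of_nonneg _ hb.le,
    ENNReal.ofReal_coe_nnreal, ENNReal.ofReal_coe_nnreal]
  exact_mod_cast NNReal.geom_mean_le_arith_mean2_weighted a b x y (by exact_mod_cast hab)

theorem lt_rpow_mul_rpow_of_lt {a b : ℝ} (ha : 0 < a) (hb : 0 < b) (hab : a + b = 1)
    {s x y : ℝ≥0∞} (hx : s < x) (hy : s < y) : s < x ^ a * y ^ b :=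
  calc s = s ^ a * s ^ b := by
        rw [← ENNReal.rpow_add_of_nonneg _ _ ha.le hb.le, hab, ENNReal.rpow_one]
    _ < x ^ a * y ^ b :=
        ENNReal.mul_lt_mul (ENNReal.rpow_lt_rpow hx ha) (ENNReal.rpow_lt_rpow hy hb)

/-- The Prékopa–Leindler inequality for the volume of a real vector space, for all pairs of
weights `a + b = 1`. -/
def PrekopaLeindler (V : Type*) [AddCommGroup V] [Module ℝ V] [MeasureSpace V] : Prop :=
  ∀ (a b : ℝ), 0 < a → 0 < b → a + b = 1 → ∀ f g h : V → ℝ≥0∞, Measurable f → Measurable g →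
    Measurable h → (∀ x y, f x ^ a * g y ^ b ≤ h (a • x + b • y)) →
    (∫⁻ x, f x) ^ a * (∫⁻ x, g x) ^ b ≤ ∫⁻ x, h x

section Real

variable {a b : ℝ} {f g h : ℝ → ℝ≥0∞}

theorem smul_lintegral_add_le_lintegral_of_iSup_eq_one (ha : 0 < a) (hb : 0 < b)
    (hab : a + b = 1) (hf : Measurable f) (hg : Measurable g) (hh : Measurable h)
    (hf1 : ⨆ x, f x = 1) (hg1 : ⨆ x, g x = 1)
    (hfgh : ∀ x y, f x ^ a * g y ^ b ≤ h (a • x + b • y)) :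
    ENNReal.ofReal a * (∫⁻ x, f x) + ENNReal.ofReal b * (∫⁻ x, g x) ≤ ∫⁻ x, h x := by
  have hlevel (t : ℝ) : ENNReal.ofReal a * volume {x | ENNReal.ofReal t < f x} +
      ENNReal.ofReal b * volume {x | ENNReal.ofReal t < g x} ≤
        volume {x | ENNReal.ofReal t < h x} := by
    rcases lt_or_ge (ENNReal.ofReal t) 1 with ht | ht
    · have hne {u : ℝ → ℝ≥0∞} (hu : ⨆ x, u x = 1) : {x | ENNReal.ofReal t < u x}.Nonempty :=
        lt_iSup_iff.1 (hu.symm ▸ ht : ENNReal.ofReal t < ⨆ x, u x)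
      have hset {u : ℝ → ℝ≥0∞} (hu : Measurable u) {c : ℝ} :
          MeasurableSet (c • {x | ENNReal.ofReal t < u x}) :=
        (measurableSet_lt measurable_const hu).const_smul₀ c
      have hBM := volume_add_volume_le_volume_add (hset hf) (hset hg)
        ((hne hf1).smul_set (a := a)) ((hne hg1).smul_set (a := b))
      simp only [Measure.addHaar_smul, finrank_self, pow_one, abs_of_pos ha, abs_of_pos hb] at hBM
      refine hBM.trans (measure_mono ?_)
      rintro _ ⟨_, ⟨x, hx, rfl⟩, _, ⟨y, hy, rfl⟩, rfl⟩
      exact (lt_rpow_mul_rpow_of_lt ha hb hab hx hy).trans_le (hfgh x y)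
    · have hempty {u : ℝ → ℝ≥0∞} (hu : ⨆ x, u x = 1) : {x | ENNReal.ofReal t < u x} = ∅ :=
        eq_empty_of_forall_notMem fun x hx ↦
          (hx.trans_le ((le_iSup u x).trans (hu.le.trans ht))).false
      simp [hempty hf1, hempty hg1]
  have hmeas (u : ℝ → ℝ≥0∞) := (antitone_meas_ofReal_lt volume u).measurable
  rw [lintegral_eq_lintegral_meas_ofReal_lt _ hf.aemeasurable,
    lintegral_eq_lintegral_meas_ofReal_lt _ hg.aemeasurable,
    lintegral_eq_lintegral_meas_ofReal_lt _ hh.aemeasurable, ← lintegral_const_mul _ (hmeas f),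
    ← lintegral_const_mul _ (hmeas g), ← lintegral_add_left ((hmeas f).const_mul _)]
  exact lintegral_mono hlevel

theorem lintegral_rpow_mul_le_lintegral_of_iSup_ne_top (ha : 0 < a) (hb : 0 < b)
    (hab : a + b = 1) (hf : Measurable f) (hg : Measurable g) (hh : Measurable h)
    (hfs : ⨆ x, f x ≠ ∞) (hgs : ⨆ x, g x ≠ ∞)
    (hfgh : ∀ x y, f x ^ a * g y ^ b ≤ h (a • x + b • y)) :
    (∫⁻ x, f x) ^ a * (∫⁻ x, g x) ^ b ≤ ∫⁻ x, h x := by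
  set p := ⨆ x, f x with hp
  set q := ⨆ x, g x with hq
  rcases eq_or_ne p 0 with hp0 | hp0
  · simp [show ∀ x, f x = 0 by simpa [hp] using hp0, ENNReal.zero_rpow_of_pos ha]
  rcases eq_or_ne q 0 with hq0 | hq0
  · simp [show ∀ x, g x = 0 by simpa [hq] using hq0, ENNReal.zero_rpow_of_pos hb]
  have hnormalized := smul_lintegral_add_le_lintegral_of_iSup_eq_one ha hb hab
    (f := fun x ↦ p⁻¹ * f x) (g := fun x ↦ q⁻¹ * g x) (h := fun x ↦ (p⁻¹ ^ a * q⁻¹ ^ b) * h x)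
    (hf.const_mul _) (hg.const_mul _) (hh.const_mul _)
    (by rw [← ENNReal.mul_iSup, ← hp, ENNReal.inv_mul_cancel hp0 hfs])
    (by rw [← ENNReal.mul_iSup, ← hq, ENNReal.inv_mul_cancel hq0 hgs])
    (fun x y ↦ by
      rw [ENNReal.mul_rpow_of_nonneg _ _ ha.le, ENNReal.mul_rpow_of_nonneg _ _ hb.le,
        mul_mul_mul_comm]
      gcongr
      exact hfgh x y)
  have hscaled := (geom_mean_le_arith_mean2_weighted_ennreal ha hb hab _ _).trans hnormalized
  rw [lintegral_const_mul _ hf, lintegral_const_mul _ hg, lintegral_const_mul _ hh,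
    ENNReal.mul_rpow_of_nonneg _ _ ha.le, ENNReal.mul_rpow_of_nonneg _ _ hb.le,
    mul_mul_mul_comm] at hscaled
  refine (ENNReal.mul_le_mul_iff_right ?_ ?_).1 hscaled
  · simp [ENNReal.rpow_eq_zero_iff, hfs, hgs, hp0, hq0, ha.not_gt, hb.not_gt]
  · refine ENNReal.mul_ne_top ?_ ?_ <;>
    simp [ENNReal.rpow_eq_top_iff, hfs, hgs, hp0, hq0, ha.not_gt, hb.not_gt]

end Real

theorem tendsto_lintegral_min_natCast {α : Type*} [MeasurableSpace α] (μ : Measure α)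
    {f : α → ℝ≥0∞} (hf : Measurable f) :
    Tendsto (fun N : ℕ ↦ ∫⁻ x, min (f x) N ∂μ) atTop (𝓝 (∫⁻ x, f x ∂μ)) := by
  refine lintegral_tendsto_of_tendsto_of_monotone
    (fun N ↦ (hf.min measurable_const).aemeasurable)
    (ae_of_all _ fun x M N hMN ↦ min_le_min le_rfl (by exact_mod_cast hMN)) (ae_of_all _ fun x ↦ ?_)
  simpa using tendsto_const_nhds.min ENNReal.tendsto_nat_nhds_top

theorem prekopaLeindler_real : PrekopaLeindler ℝ := by
  intro a b ha hb hab f g h hf hg hh hfgh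
  have htruncated (N : ℕ) :
      (∫⁻ x, min (f x) N) ^ a * (∫⁻ x, min (g x) N) ^ b ≤ ∫⁻ x, h x := by
    have hbdd (u : ℝ → ℝ≥0∞) : ⨆ x, min (u x) (N : ℝ≥0∞) ≠ ∞ :=
      ((iSup_le fun x ↦ min_le_right _ _).trans_lt (ENNReal.natCast_lt_top N)).ne
    refine lintegral_rpow_mul_le_lintegral_of_iSup_ne_top ha hb hab (hf.min measurable_const)
      (hg.min measurable_const) hh (hbdd f) (hbdd g) fun x y ↦ le_trans ?_ (hfgh x y)
    gcongr <;> exact min_le_left _ _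
  rcases eq_or_ne (∫⁻ x, f x) 0 with hf0 | hf0
  · simp [hf0, ENNReal.zero_rpow_of_pos ha]
  rcases eq_or_ne (∫⁻ x, g x) 0 with hg0 | hg0
  · simp [hg0, ENNReal.zero_rpow_of_pos hb]
  refine le_of_tendsto' (ENNReal.Tendsto.mul
    ((tendsto_lintegral_min_natCast volume hf).ennrpow_const a) (Or.inl ?_)
    ((tendsto_lintegral_min_natCast volume hg).ennrpow_const b) (Or.inl ?_)) htruncated
  · simp [ENNReal.rpow_eq_zero_iff, hf0, ha.not_gt]
  · simp [ENNReal.rpow_eq_zero_iff, hg0, hb.not_gt]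

namespace PrekopaLeindler

variable {V W : Type*} [AddCommGroup V] [Module ℝ V] [MeasureSpace V]
  [AddCommGroup W] [Module ℝ W] [MeasureSpace W]

theorem prod [SFinite (volume : Measure V)] [SFinite (volume : Measure W)]
    (hV : PrekopaLeindler V) (hW : PrekopaLeindler W) : PrekopaLeindler (V × W) := by
  intro a b ha hb hab f g h hf hg hh hfgh
  rw [Measure.volume_eq_prod, lintegral_prod _ hf.aemeasurable, lintegral_prod _ hg.aemeasurable,
    lintegral_prod _ hh.aemeasurable]
  refine hV a b ha hb hab _ _ _ hf.lintegral_prod_right' hg.lintegral_prod_right'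
    hh.lintegral_prod_right' fun x y ↦ ?_
  exact hW a b ha hb hab _ _ _ (hf.comp measurable_prodMk_left) (hg.comp measurable_prodMk_left)
    (hh.comp measurable_prodMk_left) fun u v ↦ hfgh (x, u) (y, v)

theorem map (hV : PrekopaLeindler V) (e : V →ₗ[ℝ] W) (he : MeasurePreserving e) :
    PrekopaLeindler W := by
  intro a b ha hb hab f g h hf hg hh hfgh
  rw [← he.lintegral_comp hf, ← he.lintegral_comp hg, ← he.lintegral_comp hh]
  refine hV a b ha hb hab _ _ _ (hf.comp he.measurable) (hg.comp he.measurable)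
    (hh.comp he.measurable) fun x y ↦ ?_
  simpa only [Function.comp, map_add, map_smul] using hfgh (e x) (e y)

end PrekopaLeindler

theorem prekopaLeindler_pi (n : ℕ) : PrekopaLeindler (Fin n → ℝ) := by
  induction n with
  | zero =>
    intro a b _ _ _ f g h hf hg hh hfgh
    rw [Measure.volume_pi_eq_dirac (x := 0), lintegral_dirac' _ hf, lintegral_dirac' _ hg,
      lintegral_dirac' _ hh]
    simpa using hfgh 0 0
  | succ n ih =>
    refine (prekopaLeindler_real.prod ih).map (Fin.consLinearEquiv ℝ fun _ ↦ ℝ).toLinearMap ?_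
    have hcons : ⇑(Fin.consLinearEquiv ℝ fun _ ↦ ℝ).toLinearMap =
        (MeasurableEquiv.piFinSuccAbove (fun _ ↦ ℝ) (0 : Fin (n + 1))).symm := by
      ext x i
      cases i using Fin.cases <;> simp [MeasurableEquiv.piFinSuccAbove]
    exact hcons ▸ (volume_preserving_piFinSuccAbove (fun _ ↦ ℝ) (0 : Fin (n + 1))).symm

theorem prekopaLeindler_inner (E : Type*) [NormedAddCommGroup E] [InnerProductSpace ℝ E]
    [FiniteDimensional ℝ E] [MeasurableSpace E] [BorelSpace E] : PrekopaLeindler E :=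
  let b := (stdOrthonormalBasis ℝ E).repr.symm
  ((prekopaLeindler_pi (finrank ℝ E)).map (WithLp.linearEquiv 2 ℝ _).symm.toLinearMap
    (PiLp.volume_preserving_toLp _)).map b.toLinearEquiv.toLinearMap b.measurePreserving

section BrunnMinkowski

variable {E : Type*} [NormedAddCommGroup E] [InnerProductSpace ℝ E] [FiniteDimensional ℝ E]
  [MeasurableSpace E] [BorelSpace E]

theorem volume_rpow_mul_volume_rpow_le {A B : Set E} (hA : IsCompact A) (hB : IsCompact B)
    {a b : ℝ} (ha : 0 < a) (hb : 0 < b) (hab : a + b = 1) :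
    volume A ^ a * volume B ^ b ≤ volume (a • A + b • B) := by
  have hC : MeasurableSet (a • A + b • B) := ((hA.smul a).add (hB.smul b)).measurableSet
  have hPL := prekopaLeindler_inner E a b ha hb hab (A.indicator 1) (B.indicator 1)
    ((a • A + b • B).indicator 1) (measurable_one.indicator hA.measurableSet)
    (measurable_one.indicator hB.measurableSet) (measurable_one.indicator hC) fun x y ↦ by
      by_cases hx : x ∈ A
      · by_cases hy : y ∈ B
        · have hxy : a • x + b • y ∈ a • A + b • B :=
            add_mem_add (smul_mem_smul_set hx) (smul_mem_smul_set hy)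
          simp [hx, hy, hxy]
        · simp [hy, ENNReal.zero_rpow_of_pos hb]
      · simp [hx, ENNReal.zero_rpow_of_pos ha]
  rwa [lintegral_indicator_one hA.measurableSet, lintegral_indicator_one hB.measurableSet,
    lintegral_indicator_one hC] at hPL

theorem volume_le_volume_add_of_nonempty {A B : Set E} (hA : A.Nonempty) :
    volume B ≤ volume (A + B) := by
  obtain ⟨x, hx⟩ := hA
  calc volume B = volume ({x} + B) := by simp
    _ ≤ volume (A + B) := measure_mono (add_subset_add_right (singleton_subset_iff.2 hx))

theorem exists_volume_inv_smul_eq_one [Nontrivial E] {A : Set E} (hA : IsCompact A)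
    (hA0 : volume A ≠ 0) :
    ∃ p : ℝ, 0 < p ∧ volume A ^ (finrank ℝ E : ℝ)⁻¹ = ENNReal.ofReal p ∧
      volume (p⁻¹ • A) = 1 := by
  have hlt := hA.measure_lt_top (μ := volume)
  have hne : volume A ^ (finrank ℝ E : ℝ)⁻¹ ≠ ∞ :=
    ENNReal.rpow_ne_top_of_nonneg (by positivity) hlt.ne
  have hpos : 0 < (volume A ^ (finrank ℝ E : ℝ)⁻¹).toReal :=
    ENNReal.toReal_pos (by simp [ENNReal.rpow_eq_zero_iff, hA0, hlt.ne]) hne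
  refine ⟨_, hpos, (ENNReal.ofReal_toReal hne).symm, ?_⟩
  rw [Measure.addHaar_smul, abs_of_pos (by positivity), ENNReal.ofReal_pow (by positivity),
    ENNReal.ofReal_inv_of_pos hpos, ENNReal.ofReal_toReal hne, ← ENNReal.inv_pow,
    ENNReal.rpow_inv_natCast_pow finrank_pos.ne', ENNReal.inv_mul_cancel hA0 hlt.ne]

theorem brunn_minkowski [Nontrivial E] {A B : Set E} (hA : IsCompact A) (hB : IsCompact B)
    (hA0 : A.Nonempty) (hB0 : B.Nonempty) :
    volume A ^ (finrank ℝ E : ℝ)⁻¹ + volume B ^ (finrank ℝ E : ℝ)⁻¹ ≤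
      volume (A + B) ^ (finrank ℝ E : ℝ)⁻¹ := by
  set m := finrank ℝ E with hm
  have hm0 : m ≠ 0 := finrank_pos.ne'
  have hinv : 0 < (m : ℝ)⁻¹ := by positivity
  rcases eq_or_ne (volume A) 0 with hvA | hvA
  · rw [hvA, ENNReal.zero_rpow_of_pos hinv, zero_add]
    exact ENNReal.rpow_le_rpow (volume_le_volume_add_of_nonempty hA0) hinv.le
  rcases eq_or_ne (volume B) 0 with hvB | hvB
  · rw [hvB, ENNReal.zero_rpow_of_pos hinv, add_zero, add_comm A B]
    exact ENNReal.rpow_le_rpow (volume_le_volume_add_of_nonempty hB0) hinv.le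
  obtain ⟨p, hp, hAp, hA1⟩ := exists_volume_inv_smul_eq_one hA hvA
  obtain ⟨q, hq, hBq, hB1⟩ := exists_volume_inv_smul_eq_one hB hvB
  have hpq : 0 < p + q := add_pos hp hq
  have hmul := volume_rpow_mul_volume_rpow_le (hA.smul p⁻¹) (hB.smul q⁻¹)
    (div_pos hp hpq) (div_pos hq hpq) (by field_simp)
  have hset : (p / (p + q)) • p⁻¹ • A + (q / (p + q)) • q⁻¹ • B = (p + q)⁻¹ • (A + B) := by
    rw [smul_add, smul_smul, smul_smul]
    congr 2 <;> field_simp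
  rw [hA1, hB1, ENNReal.one_rpow, ENNReal.one_rpow, one_mul, hset, Measure.addHaar_smul, ← hm,
    abs_of_pos (by positivity), ENNReal.ofReal_pow (by positivity),
    ENNReal.ofReal_inv_of_pos hpq, ← ENNReal.inv_pow,
    ← ENNReal.mul_le_iff_le_inv (by simp [hpq]) (by simp), mul_one] at hmul
  rwa [hAp, hBq, ← ENNReal.ofReal_add hp.le hq.le, ENNReal.le_rpow_inv_iff (by positivity),
    ENNReal.rpow_natCast]

end BrunnMinkowski

/-! ### Shadows of convex bodies and the isoperimetric inequality for zonotopes -/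

section Shadow

variable {E : Type*} [NormedAddCommGroup E] [InnerProductSpace ℝ E]

/-- The shadow `P_W K` of a set `K` on a subspace `W`: its orthogonal projection. -/
def shadow (W : Submodule ℝ E) [W.HasOrthogonalProjection] (K : Set E) : Set W :=
  W.orthogonalProjectionOnto '' K

theorem mem_shadow_iff {W : Submodule ℝ E} [W.HasOrthogonalProjection] {K : Set E} {y : W} :
    y ∈ shadow W K ↔ ∃ z : Wᗮ, (y : E) + z ∈ K := by
  constructor
  · rintro ⟨x, hx, rfl⟩
    refine ⟨Wᗮ.orthogonalProjectionOnto x, ?_⟩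
    rwa [← Submodule.starProjection_apply, ← Submodule.starProjection_apply,
      W.starProjection_add_starProjection_orthogonal]
  · rintro ⟨z, hz⟩
    exact ⟨_, hz, by simp⟩

theorem mem_shadow_orthogonal_span_iff {e : E} {K : Set E} {y : (ℝ ∙ e)ᗮ} :
    y ∈ shadow (ℝ ∙ e)ᗮ K ↔ ∃ t : ℝ, t • e + (y : E) ∈ K := by
  simp_rw [mem_shadow_iff, Subtype.exists, Submodule.orthogonal_orthogonal,
    Submodule.mem_span_singleton, add_comm _ (y : E)]
  exact ⟨fun ⟨_, ⟨t, rfl⟩, h⟩ ↦ ⟨t, h⟩, fun ⟨t, h⟩ ↦ ⟨_, ⟨t, rfl⟩, h⟩⟩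

theorem isCompact_shadow (W : Submodule ℝ E) [W.HasOrthogonalProjection] {K : Set E}
    (hK : IsCompact K) : IsCompact (shadow W K) :=
  hK.image (ContinuousLinearMap.continuous _)

theorem segment_neg_smul_self {e : E} {s : ℝ} (hs : 0 ≤ s) :
    segment ℝ (-(s • e)) (s • e) = (fun t : ℝ ↦ t • e) '' Icc (-s) s := by
  rw [← segment_eq_Icc (by linarith), ← neg_smul]
  exact (image_segment ℝ (LinearMap.toSpanSingleton ℝ E e).toAffineMap (-s) s).symm

theorem isCompact_segment (x y : E) : IsCompact (segment ℝ x y) := by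
  rw [segment_eq_image_lineMap]
  exact isCompact_Icc.image AffineMap.lineMap_continuous

/-- The zonotope `∑ i ∈ S, [-v i, v i]` generated by the vectors `v i`, `i ∈ S`. -/
def zonotope {ι : Type*} (S : Finset ι) (v : ι → E) : Set E :=
  ∑ i ∈ S, segment ℝ (-(v i)) (v i)

section Zonotope

variable {ι : Type*} {S : Finset ι} {v : ι → E}

theorem isCompact_zonotope : IsCompact (zonotope S v) :=
  Finset.sum_induction _ IsCompact (fun _ _ ↦ IsCompact.add) isCompact_singleton
    fun _ _ ↦ isCompact_segment _ _

theorem convex_zonotope : Convex ℝ (zonotope S v) :=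
  convex_sum _ fun _ _ ↦ convex_segment _ _

theorem zonotope_insert [DecidableEq ι] {i : ι} (hi : i ∉ S) :
    zonotope (insert i S) v = zonotope S v + segment ℝ (-(v i)) (v i) := by
  rw [zonotope, Finset.sum_insert hi, add_comm, zonotope]

theorem zonotope_smul (c : ℝ) : zonotope S (fun i ↦ c • v i) = c • zonotope S v := by
  simp only [zonotope, Finset.smul_sum]
  refine Finset.sum_congr rfl fun i _ ↦ ?_
  rw [← smul_neg]
  exact (image_segment ℝ (c • AffineMap.id ℝ E) _ _).symm

theorem norm_le_of_mem_zonotope {x : E} (hx : x ∈ zonotope S v) : ‖x‖ ≤ ∑ i ∈ S, ‖v i‖ := by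
  obtain ⟨g, hg, rfl⟩ := (mem_finsetSum _ _ _).1 hx
  refine norm_sum_le_of_le S fun i hi ↦ ?_
  have hball := (convex_closedBall (0 : E) ‖v i‖).segment_subset (by simp) (by simp) (hg hi)
  simpa using hball

theorem shadow_add_zonotope_subset (W : Submodule ℝ E) [W.HasOrthogonalProjection] (K : Set E)
    {C : ℝ} (hC : ∑ i ∈ S, ‖v i‖ ≤ C) :
    shadow W (K + zonotope S v) ⊆ cthickening C (shadow W K) := by
  rintro _ ⟨_, ⟨x, hx, z, hz, rfl⟩, rfl⟩
  refine mem_cthickening_of_dist_le _ (W.orthogonalProjectionOnto x) _ _ ⟨x, hx, rfl⟩ ?_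
  rw [map_add, dist_eq_norm, add_sub_cancel_left]
  exact (W.norm_orthogonalProjectionOnto_apply_le z).trans ((norm_le_of_mem_zonotope hz).trans hC)

end Zonotope

end Shadow

section Isoperimetry

variable {E : Type*} [NormedAddCommGroup E] [InnerProductSpace ℝ E] [FiniteDimensional ℝ E]
  [MeasurableSpace E] [BorelSpace E]

theorem volume_add_Icc_le {I : Set ℝ} (hI : IsCompact I) (hIc : Convex ℝ I) {s : ℝ} (hs : 0 ≤ s) :
    volume (I + Icc (-s) s) ≤ volume I + ENNReal.ofReal (2 * s) := by
  rcases I.eq_empty_or_nonempty with rfl | hne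
  · simp
  · have hIcc := eq_Icc_of_connected_compact ⟨hne, hIc.isPreconnected⟩ hI
    have hle : sInf I ≤ sSup I := csInf_le_csSup hne hI.bddBelow hI.bddAbove
    rw [hIcc, Set.Icc_add_Icc hle (by linarith), Real.volume_Icc, Real.volume_Icc,
      ← ENNReal.ofReal_add (by linarith) (by linarith)]
    exact ENNReal.ofReal_le_ofReal (by linarith)

theorem measurePreserving_smul_add_orthogonal {e : E} (he : ‖e‖ = 1) :
    MeasurePreserving (fun p : ℝ × (ℝ ∙ e)ᗮ ↦ p.1 • e + (p.2 : E)) := by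
  have hline := (LinearIsometryEquiv.toSpanUnitSingleton (𝕜 := ℝ) e he).measurePreserving
  convert! ((ℝ ∙ e).orthogonalDecomposition).symm.measurePreserving.comp <|
    (WithLp.volume_preserving_toLp (ℝ ∙ e) (ℝ ∙ e)ᗮ).comp <|
      hline.prod (MeasurePreserving.id (volume : Measure (ℝ ∙ e)ᗮ)) using 1

theorem volume_eq_lintegral_volume_fiber {e : E} (he : ‖e‖ = 1) {A : Set E}
    (hA : MeasurableSet A) :
    volume A = ∫⁻ y : (ℝ ∙ e)ᗮ, volume {t : ℝ | t • e + (y : E) ∈ A} := by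
  have hsplit := measurePreserving_smul_add_orthogonal he
  rw [← hsplit.measure_preimage hA.nullMeasurableSet, Measure.volume_eq_prod,
    Measure.prod_apply_symm (hsplit.measurable hA)]
  rfl

theorem volume_add_segment_smul_le {K : Set E} (hK : IsCompact K) (hKc : Convex ℝ K) {e : E}
    (he : ‖e‖ = 1) {s : ℝ} (hs : 0 ≤ s) :
    volume (K + segment ℝ (-(s • e)) (s • e)) ≤
      volume K + ENNReal.ofReal (2 * s) * volume (shadow (ℝ ∙ e)ᗮ K) := by
  have hshadow := (isCompact_shadow (ℝ ∙ e)ᗮ hK).measurableSet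
  have hfiber (y : (ℝ ∙ e)ᗮ) :
      volume {t : ℝ | t • e + (y : E) ∈ K + segment ℝ (-(s • e)) (s • e)} ≤
        volume {t : ℝ | t • e + (y : E) ∈ K} +
          ENNReal.ofReal (2 * s) * (shadow (ℝ ∙ e)ᗮ K).indicator 1 y := by
    have hsub : {t : ℝ | t • e + (y : E) ∈ K + segment ℝ (-(s • e)) (s • e)} ⊆
        {t : ℝ | t • e + (y : E) ∈ K} + Icc (-s) s := by
      rw [segment_neg_smul_self hs]
      rintro t ⟨k, hk, _, ⟨r, hr, rfl⟩, hkr⟩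
      refine ⟨t - r, ?_, r, hr, by simp⟩
      rwa [mem_ofPred_eq, sub_smul, sub_add_eq_add_sub, ← hkr, add_sub_cancel_right]
    by_cases hy : y ∈ shadow (ℝ ∙ e)ᗮ K
    · rw [indicator_of_mem hy, Pi.one_apply, mul_one]
      refine (measure_mono hsub).trans (volume_add_Icc_le ?_ ?_ hs)
      · exact ((Homeomorph.addRight (y : E)).isClosedEmbedding.comp (isClosedEmbedding_smul_left
          (norm_ne_zero_iff.1 (he ▸ one_ne_zero)))).isCompact_preimage hK
      · exact (hKc.translate_preimage_left (y : E)) |>.linear_preimage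
          (LinearMap.toSpanSingleton ℝ E e)
    · have hempty : {t : ℝ | t • e + (y : E) ∈ K} = ∅ :=
        eq_empty_of_forall_notMem fun t ht ↦ hy (mem_shadow_orthogonal_span_iff.2 ⟨t, ht⟩)
      rw [hempty, empty_add, subset_empty_iff] at hsub
      simp [hsub]
  rw [volume_eq_lintegral_volume_fiber he (hK.add (isCompact_segment _ _)).measurableSet,
    volume_eq_lintegral_volume_fiber he hK.measurableSet, ← lintegral_indicator_one hshadow,
    ← lintegral_const_mul _ (measurable_one.indicator hshadow),
    ← lintegral_add_right _ ((measurable_one.indicator hshadow).const_mul _)]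
  exact lintegral_mono hfiber

theorem volume_add_segment_le {K : Set E} (hK : IsCompact K) (hKc : Convex ℝ K) (v : E) :
    volume (K + segment ℝ (-v) v) ≤
      volume K + ENNReal.ofReal (2 * ‖v‖) * volume (shadow (ℝ ∙ v)ᗮ K) := by
  rcases eq_or_ne v 0 with rfl | hv
  · simp
  have hv' : ‖v‖ ≠ 0 := norm_ne_zero_iff.2 hv
  have hcongr {W W' : Submodule ℝ E} (h : W = W') : volume (shadow W K) = volume (shadow W' K) := by
    subst h; rfl
  have hle := volume_add_segment_smul_le hK hKc (norm_smul_inv_norm (𝕜 := ℝ) hv) (norm_nonneg v)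
  rwa [RCLike.ofReal_real_eq_id, id, smul_inv_smul₀ hv', hcongr (W' := (ℝ ∙ v)ᗮ)
    (by rw [Submodule.span_singleton_smul_eq (IsUnit.mk0 _ (inv_ne_zero hv'))])] at hle

theorem volume_add_zonotope_le {ι : Type*} {K : Set E} (hK : IsCompact K) (hKc : Convex ℝ K)
    {S : Finset ι} {v : ι → E} {C : ℝ} (hC : ∑ i ∈ S, ‖v i‖ ≤ C) :
    volume (K + zonotope S v) ≤ volume K + ∑ i ∈ S, ENNReal.ofReal (2 * ‖v i‖) *
      volume (cthickening C (shadow (ℝ ∙ v i)ᗮ K)) := by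
  classical
  induction S using Finset.induction_on with
  | empty => simp [zonotope]
  | insert i S hi ih =>
    have hC' : ∑ j ∈ S, ‖v j‖ ≤ C :=
      (Finset.sum_le_sum_of_subset_of_nonneg (Finset.subset_insert i S) (by simp)).trans hC
    rw [zonotope_insert hi, ← add_assoc, Finset.sum_insert hi,
      add_comm (ENNReal.ofReal _ * _), ← add_assoc]
    refine (volume_add_segment_le (hK.add isCompact_zonotope) (hKc.add convex_zonotope) _).trans ?_
    gcongr
    · exact ih hC'
    · exact shadow_add_zonotope_subset _ K hC'

end Isoperimetry

section ZonotopeIsoperimetry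

variable {E : Type*} [NormedAddCommGroup E] [InnerProductSpace ℝ E] [FiniteDimensional ℝ E]
  [MeasurableSpace E] [BorelSpace E] {ι : Type*} {S : Finset ι} {v : ι → E} {d : ℕ}

theorem volume_add_mul_le_volume_add (hd : finrank ℝ E = d + 1) {K B : Set E} (hK : IsCompact K)
    (hB : IsCompact B) (hK0 : K.Nonempty) (hB0 : B.Nonempty) :
    volume K + (d + 1) * volume K ^ ((d : ℝ) / (d + 1)) * volume B ^ ((d + 1 : ℝ)⁻¹) ≤
      volume (K + B) := by
  have : Nontrivial E := Module.nontrivial_of_finrank_pos (R := ℝ) (by lia)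
  have hpow (x : ℝ≥0∞) : (x ^ (d + 1 : ℝ)⁻¹) ^ (d + 1) = x := by
    rw [← ENNReal.rpow_natCast, Nat.cast_succ, ENNReal.rpow_inv_rpow (by positivity)]
  have hbm := pow_le_pow_left₀ zero_le (brunn_minkowski hK hB hK0 hB0) (d + 1)
  have hbinom := pow_add_mul_le_add_pow (a := volume K ^ (d + 1 : ℝ)⁻¹)
    (b := volume B ^ (d + 1 : ℝ)⁻¹) zero_le zero_le (d + 1)
  rw [hd, Nat.cast_succ, hpow] at hbm
  rw [hpow, add_tsub_cancel_right, Nat.cast_succ, ← ENNReal.rpow_natCast, ← ENNReal.rpow_mul,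
    inv_mul_eq_div] at hbinom
  exact hbinom.trans hbm

theorem volume_add_zonotope_smul_le {K : Set E} (hK : IsCompact K) (hKc : Convex ℝ K) {ε : ℝ}
    (hε : 0 < ε) :
    volume (K + ε • zonotope S v) ≤ volume K + ENNReal.ofReal ε * ∑ i ∈ S,
      ENNReal.ofReal (2 * ‖v i‖) *
        volume (cthickening (ε * ∑ i ∈ S, ‖v i‖) (shadow (ℝ ∙ v i)ᗮ K)) := by
  have hcongr {W W' : Submodule ℝ E} (h : W = W') (C : ℝ) :
      volume (cthickening C (shadow W K)) = volume (cthickening C (shadow W' K)) := by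
    subst h; rfl
  rw [← zonotope_smul, Finset.mul_sum, Finset.mul_sum]
  refine (volume_add_zonotope_le hK hKc (Finset.sum_congr rfl fun i _ ↦
    norm_smul_of_nonneg hε.le (v i)).le).trans_eq ?_
  congr 1
  refine Finset.sum_congr rfl fun i _ ↦ ?_
  rw [hcongr (congrArg _ (Submodule.span_singleton_smul_eq (IsUnit.mk0 ε hε.ne') (v i))),
    norm_smul_of_nonneg hε.le, mul_left_comm, ENNReal.ofReal_mul hε.le, mul_assoc]

theorem isoperimetric_zonotope_of_isCompact (hd : finrank ℝ E = d + 1) {K B : Set E}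
    (hK : IsCompact K) (hKc : Convex ℝ K) (hK0 : K.Nonempty) (hB : IsCompact B)
    (hBv : B ⊆ zonotope S v) :
    (d + 1) * volume K ^ ((d : ℝ) / (d + 1)) * volume B ^ ((d + 1 : ℝ)⁻¹) ≤
      ∑ i ∈ S, ENNReal.ofReal (2 * ‖v i‖) * volume (shadow (ℝ ∙ v i)ᗮ K) := by
  rcases B.eq_empty_or_nonempty with rfl | hB0
  · simp [ENNReal.zero_rpow_of_pos (inv_pos.2 (by positivity : (0 : ℝ) < d + 1))]
  set C := ∑ i ∈ S, ‖v i‖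
  have hscaled {ε : ℝ} (hε : 0 < ε) :
      (d + 1) * volume K ^ ((d : ℝ) / (d + 1)) * volume B ^ ((d + 1 : ℝ)⁻¹) ≤
        ∑ i ∈ S, ENNReal.ofReal (2 * ‖v i‖) *
          volume (cthickening (ε * C) (shadow (ℝ ∙ v i)ᗮ K)) := by
    have hroot : (ε ^ (d + 1)) ^ (d + 1 : ℝ)⁻¹ = ε := by
      exact_mod_cast Real.pow_rpow_inv_natCast hε.le d.succ_ne_zero
    have hle := (volume_add_mul_le_volume_add hd hK (hB.smul ε) hK0 (hB0.smul_set)).trans <|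
      (measure_mono (add_subset_add_left (smul_set_mono hBv))).trans <|
        volume_add_zonotope_smul_le hK hKc hε
    rw [ENNReal.add_le_add_iff_left hK.measure_lt_top.ne, Measure.addHaar_smul, hd,
      abs_of_pos (pow_pos hε _), ENNReal.mul_rpow_of_nonneg _ _ (by positivity),
      ENNReal.ofReal_rpow_of_pos (pow_pos hε _), hroot, mul_left_comm] at hle
    exact (ENNReal.mul_le_mul_iff_right (by simpa using hε) ENNReal.ofReal_ne_top).1 hle
  have hlim : Tendsto (fun ε : ℝ ↦ ∑ i ∈ S, ENNReal.ofReal (2 * ‖v i‖) *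
        volume (cthickening (ε * C) (shadow (ℝ ∙ v i)ᗮ K))) (𝓝[>] 0)
      (𝓝 (∑ i ∈ S, ENNReal.ofReal (2 * ‖v i‖) * volume (shadow (ℝ ∙ v i)ᗮ K))) := by
    refine tendsto_finsetSum _ fun i _ ↦ ENNReal.Tendsto.const_mul ?_ (.inr ENNReal.ofReal_ne_top)
    have hmul : Tendsto (fun ε : ℝ ↦ ε * C) (𝓝[>] 0) (𝓝 0) :=
      ((continuous_mul_const C).tendsto' 0 0 (zero_mul C)).mono_left nhdsWithin_le_nhds
    exact (tendsto_measure_cthickening_of_isCompact (isCompact_shadow _ hK)).comp hmul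
  exact ge_of_tendsto hlim (eventually_mem_nhdsWithin.mono fun ε hε ↦ hscaled hε)

theorem isoperimetric_zonotope_of_isBounded (hd : finrank ℝ E = d + 1) {K B : Set E}
    (hK : Bornology.IsBounded K) (hKc : Convex ℝ K) (hK0 : K.Nonempty) (hB : IsCompact B)
    (hBv : B ⊆ zonotope S v) :
    (d + 1) * volume K ^ ((d : ℝ) / (d + 1)) * volume B ^ ((d + 1 : ℝ)⁻¹) ≤
      ∑ i ∈ S, ENNReal.ofReal (2 * ‖v i‖) * volume (shadow (ℝ ∙ v i)ᗮ K) := by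
  have hshadow (W : Submodule ℝ E) : volume (shadow W (closure K)) ≤ volume (shadow W K) := by
    have hconv : Convex ℝ (shadow W K) := hKc.linear_image W.orthogonalProjectionOnto.toLinearMap
    rw [← measure_congr (closure_ae_eq_of_null_frontier (hconv.addHaar_frontier volume))]
    exact measure_mono (image_closure_subset_closure_image (ContinuousLinearMap.continuous _))
  have hclosure := isoperimetric_zonotope_of_isCompact hd hK.isCompact_closure hKc.closure
    hK0.closure hB hBv
  rw [measure_congr (closure_ae_eq_of_null_frontier (hKc.addHaar_frontier volume))] at hclosure
  exact hclosure.trans (Finset.sum_le_sum fun i _ ↦ mul_le_mul_right (hshadow _) _)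

theorem isoperimetric_zonotope (hd : finrank ℝ E = d + 1) (hd0 : 0 < d) {K B : Set E}
    (hKc : Convex ℝ K) (hB : IsCompact B) (hBv : B ⊆ zonotope S v) :
    (d + 1) * volume K ^ ((d : ℝ) / (d + 1)) * volume B ^ ((d + 1 : ℝ)⁻¹) ≤
      ∑ i ∈ S, ENNReal.ofReal (2 * ‖v i‖) * volume (shadow (ℝ ∙ v i)ᗮ K) := by
  have hexp : (0 : ℝ) < d / (d + 1) := by positivity
  have hmono : Monotone fun n : ℕ ↦ K ∩ closedBall 0 (n : ℝ) := fun m n hmn ↦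
    inter_subset_inter_right K (closedBall_subset_closedBall (Nat.cast_le.2 hmn))
  have hpow : volume K ^ ((d : ℝ) / (d + 1)) =
      ⨆ n : ℕ, volume (K ∩ closedBall 0 n) ^ ((d : ℝ) / (d + 1)) := by
    conv_lhs => rw [← iUnion_inter_closedBall_nat K 0, hmono.measure_iUnion]
    exact (ENNReal.orderIsoRpow _ hexp).map_iSup _
  rw [hpow, ENNReal.mul_iSup, ENNReal.iSup_mul]
  refine iSup_le fun n ↦ ?_
  rcases (K ∩ closedBall 0 (n : ℝ)).eq_empty_or_nonempty with hK0 | hK0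
  · simp [hK0, ENNReal.zero_rpow_of_pos hexp]
  refine (isoperimetric_zonotope_of_isBounded hd (isBounded_closedBall.subset inter_subset_right)
    (hKc.inter (convex_closedBall _ _)) hK0 hB hBv).trans ?_
  gcongr
  exact image_mono inter_subset_left

end ZonotopeIsoperimetry

/-! ### Averages over rotations and over balls -/

theorem lintegral_map_linearIsometry {E F : Type*} [NormedAddCommGroup E] [InnerProductSpace ℝ E]
    [MeasurableSpace E] [BorelSpace E] [NormedAddCommGroup F] [InnerProductSpace ℝ F]
    [FiniteDimensional ℝ F] [MeasurableSpace F] [BorelSpace F] (L : F →ₗᵢ[ℝ] E) (W : Submodule ℝ F)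
    (φ : E → ℝ≥0∞) :
    ∫⁻ y : W.map L.toLinearMap, φ y = ∫⁻ y : W, φ (L y) := by
  let e : W ≃ₗᵢ[ℝ] W.map L.toLinearMap :=
    .ofSurjective (L.submoduleMap W) (L.toLinearMap.submoduleMap_surjective W)
  exact (e.measurePreserving.lintegral_comp_emb e.toHomeomorph.measurableEmbedding (φ ·)).symm

section RotationAverage

variable {E : Type*} [NormedAddCommGroup E] [InnerProductSpace ℝ E] [FiniteDimensional ℝ E]

variable (E) in
/-- The compact group of rotations of `E`; reflections are included. -/
abbrev RotationGroup : Type _ := unitary (E →L[ℝ] E)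

instance : CompactSpace (RotationGroup E) :=
  isCompact_iff_compactSpace.1 <| isCompact_of_isClosed_isBounded isClosed_unitary <|
    (isBounded_closedBall (x := 0) (r := 1)).subset fun R hR ↦ mem_closedBall_zero_iff.2 <|
      ContinuousLinearMap.opNorm_le_bound _ zero_le_one fun x ↦
        (((Unitary.linearIsometryEquiv ⟨R, hR⟩).norm_map x).trans (one_mul _).symm).le

theorem exists_rotation_apply_eq {x y : E} (h : ‖x‖ = ‖y‖) :
    ∃ R : RotationGroup E, (R : E →L[ℝ] E) x = y :=
  ⟨Unitary.linearIsometryEquiv.symm (ℝ ∙ (x - y))ᗮ.reflection, Submodule.reflection_sub h⟩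

theorem orthogonal_span_rotation (R : RotationGroup E) (e : E) :
    (ℝ ∙ (R : E →L[ℝ] E) e)ᗮ = (ℝ ∙ e)ᗮ.map (R : E →L[ℝ] E).toLinearMap := by
  refine Eq.trans ?_ (Submodule.map_orthogonal_equiv _ (Unitary.linearIsometryEquiv R)).symm
  rw [Submodule.map_span, image_singleton]
  rfl

variable (E) in
/-- The probability measure on the rotation group of `E` that is invariant under
right multiplication. -/
def rotationMeasure : Measure (RotationGroup E) := (Measure.haarMeasure ⊤).inv

instance : (rotationMeasure E).IsMulRightInvariant :=
  inferInstanceAs (Measure.haarMeasure ⊤).inv.IsMulRightInvariant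

instance : IsProbabilityMeasure (rotationMeasure E) := ⟨by
  rw [rotationMeasure, Measure.inv_apply, inv_univ]
  exact Measure.haarMeasure_self (K₀ := ⊤)⟩

/-- The average of `φ` over rotations: `x ↦ ∫ φ (R x) dR`. -/
def rotationAverage (φ : E → ℝ≥0∞) (x : E) : ℝ≥0∞ :=
  ∫⁻ R : RotationGroup E, φ ((R : E →L[ℝ] E) x) ∂rotationMeasure E

theorem rotationAverage_eq_of_norm_eq (φ : E → ℝ≥0∞) {x y : E} (h : ‖x‖ = ‖y‖) :
    rotationAverage φ x = rotationAverage φ y := by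
  obtain ⟨T, rfl⟩ := exists_rotation_apply_eq h
  exact (lintegral_mul_right_eq_self (fun R : RotationGroup E ↦ φ ((R : E →L[ℝ] E) x)) T).symm

variable [MeasurableSpace E] [BorelSpace E]

theorem measurable_rotationAverage {φ : E → ℝ≥0∞} (hφ : Measurable φ) :
    Measurable (rotationAverage φ) := by
  have happly : Measurable fun p : E × RotationGroup E ↦ (p.2 : E →L[ℝ] E) p.1 := by fun_prop
  exact (hφ.comp happly).lintegral_prod_right'

theorem lintegral_map_rotation (R : RotationGroup E) (W : Submodule ℝ E) (φ : E → ℝ≥0∞) :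
    ∫⁻ y : W.map (R : E →L[ℝ] E).toLinearMap, φ y = ∫⁻ y : W, φ ((R : E →L[ℝ] E) y) :=
  lintegral_map_linearIsometry (Unitary.linearIsometryEquiv R).toLinearIsometry W φ

theorem measurable_lintegral_map_rotation {φ : E → ℝ≥0∞} (hφ : Measurable φ) (W : Submodule ℝ E) :
    Measurable fun R : RotationGroup E ↦ ∫⁻ y : W.map (R : E →L[ℝ] E).toLinearMap, φ y := by
  have happly : Measurable fun p : RotationGroup E × W ↦ (p.1 : E →L[ℝ] E) p.2 := by fun_prop
  simp_rw [lintegral_map_rotation]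
  exact (hφ.comp happly).lintegral_prod_right'

theorem lintegral_lintegral_map_rotation {φ : E → ℝ≥0∞} (hφ : Measurable φ) (W : Submodule ℝ E) :
    ∫⁻ R : RotationGroup E, (∫⁻ y : W.map (R : E →L[ℝ] E).toLinearMap, φ y) ∂rotationMeasure E =
      ∫⁻ y : W, rotationAverage φ y := by
  have happly : Measurable fun p : RotationGroup E × W ↦ (p.1 : E →L[ℝ] E) p.2 := by fun_prop
  simp_rw [rotationAverage, lintegral_map_rotation]
  exact lintegral_lintegral_swap (f := fun (R : RotationGroup E) (y : W) ↦ φ ((R : E →L[ℝ] E) y))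
    (hφ.comp happly).aemeasurable

theorem lintegral_rotationAverage {φ : E → ℝ≥0∞} (hφ : Measurable φ) :
    ∫⁻ x, rotationAverage φ x = ∫⁻ x, φ x := by
  have happly : Measurable fun p : RotationGroup E × E ↦ (p.1 : E →L[ℝ] E) p.2 := by fun_prop
  have hrot (R : RotationGroup E) : ∫⁻ x, φ ((R : E →L[ℝ] E) x) = ∫⁻ x, φ x :=
    (Unitary.linearIsometryEquiv R).measurePreserving.lintegral_comp hφ
  simp_rw [rotationAverage]
  rw [← lintegral_lintegral_swap (f := fun (R : RotationGroup E) x ↦ φ ((R : E →L[ℝ] E) x))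
    (hφ.comp happly).aemeasurable]
  simp [hrot]

end RotationAverage

section Polar

variable {E : Type*} [NormedAddCommGroup E] [InnerProductSpace ℝ E] [FiniteDimensional ℝ E]
  [MeasurableSpace E] [BorelSpace E] {j : ℕ}

theorem lintegral_comp_norm (hj : finrank ℝ E = j + 1) {g : ℝ → ℝ≥0∞} (hg : Measurable g) :
    ∫⁻ x : E, g ‖x‖ =
      (j + 1) * volume (ball (0 : E) 1) * ∫⁻ r in Ioi (0 : ℝ), ENNReal.ofReal r ^ j * g r := by
  have : Nontrivial E := Module.nontrivial_of_finrank_pos (R := ℝ) (by lia)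
  calc ∫⁻ x : E, g ‖x‖
    _ = ∫⁻ x : ({0}ᶜ : Set E), g ‖(x : E)‖ ∂Measure.comap Subtype.val volume := by
      rw [lintegral_subtype_comap (measurableSet_singleton _).compl fun x ↦ g ‖x‖,
        restrict_compl_singleton]
    _ = ∫⁻ p, g p.2.1 ∂(volume.toSphere.prod (Measure.volumeIoiPow (finrank ℝ E - 1))) := by
      rw [← (volume : Measure E).measurePreserving_homeomorphUnitSphereProd.lintegral_comp
        (by fun_prop)]
      simp
    _ = volume.toSphere (univ : Set (sphere (0 : E) 1)) *
        ∫⁻ r in Ioi (0 : ℝ), ENNReal.ofReal (r ^ j) * g r := by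
      rw [lintegral_prod _ (by fun_prop)]
      simp only [lintegral_const]
      rw [mul_comm, Measure.volumeIoiPow, hj, add_tsub_cancel_right,
        lintegral_withDensity_eq_lintegral_mul _ (by fun_prop) (by fun_prop)]
      congr 1
      exact lintegral_subtype_comap measurableSet_Ioi fun r ↦ ENNReal.ofReal (r ^ j) * g r
    _ = _ := by
      rw [Measure.toSphere_apply_univ, hj, Nat.cast_succ]
      congr 1
      exact setLIntegral_congr_fun measurableSet_Ioi fun r hr ↦ by
        simp only [ENNReal.ofReal_pow (le_of_lt hr)]

theorem lintegral_ofReal_pow_indicator (j : ℕ) {ρ : ℝ} (hρ : 0 < ρ) :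
    (j + 1) * ∫⁻ r in Ioi (0 : ℝ), (Iio ρ).indicator (fun r ↦ ENNReal.ofReal r ^ j) r =
      ENNReal.ofReal ρ ^ (j + 1) := by
  have hpow : ∫⁻ r in Ioi (0 : ℝ), (Iio ρ).indicator (fun r ↦ ENNReal.ofReal r ^ j) r =
      ENNReal.ofReal (ρ ^ (j + 1) / (j + 1)) := by
    rw [setLIntegral_indicator measurableSet_Iio, inter_comm, Ioi_inter_Iio,
      Measure.restrict_congr_set Ioo_ae_eq_Ioc,
      setLIntegral_congr_fun measurableSet_Ioc fun r hr ↦ (ENNReal.ofReal_pow hr.1.le j).symm,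
      ← ofReal_integral_eq_lintegral_ofReal (intervalIntegral.intervalIntegrable_pow j).1
        ((ae_restrict_mem measurableSet_Ioc).mono fun r hr ↦ pow_nonneg hr.1.le j),
      ← intervalIntegral.integral_of_le hρ.le]
    simp
  rw [hpow, ← Nat.cast_succ, ← ENNReal.ofReal_natCast, ← ENNReal.ofReal_mul (by positivity),
    ← ENNReal.ofReal_pow hρ.le, Nat.cast_succ, mul_div_cancel₀ _ (by positivity)]

theorem lintegral_ball_ofReal_norm_pow (hj : finrank ℝ E = j + 1) (p : ℕ) :
    (j + 1 + p) * ∫⁻ x : E in ball 0 1, ENNReal.ofReal ‖x‖ ^ p =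
      (j + 1) * volume (ball (0 : E) 1) := by
  have hpolar : ∫⁻ x : E in ball 0 1, ENNReal.ofReal ‖x‖ ^ p = (j + 1) * volume (ball (0 : E) 1) *
      ∫⁻ r in Ioi (0 : ℝ), (Iio 1).indicator (fun r ↦ ENNReal.ofReal r ^ (j + p)) r := by
    convert lintegral_comp_norm hj (g := (Iio 1).indicator fun r ↦ ENNReal.ofReal r ^ p)
      ((by fun_prop : Measurable _).indicator measurableSet_Iio) using 1
    · rw [← lintegral_indicator measurableSet_ball]
      simp [indicator]
    · simp only [indicator, mul_ite, mul_zero, pow_add]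
  have hpow := lintegral_ofReal_pow_indicator (j + p) one_pos
  rw [hpolar, mul_left_comm, add_right_comm, ← Nat.cast_add, hpow]
  simp

end Polar

section Bathtub

variable {j : ℕ} {g : ℝ → ℝ≥0∞} {M : ℝ≥0∞}

/-! The bathtub principle: among `g ≤ M` with a prescribed moment of order `j + 1`, the moment of
order `j` is largest for `g = M • 𝟙_[0, ρ)`. -/

theorem bathtub_pointwise (j : ℕ) (hgM : ∀ r, g r ≤ M) (ρ r : ℝ) :
    ENNReal.ofReal ρ * (ENNReal.ofReal r ^ j * g r) +
        M * (Iio ρ).indicator (fun r ↦ ENNReal.ofReal r ^ (j + 1)) r ≤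
      ENNReal.ofReal r ^ (j + 1) * g r +
        M * ENNReal.ofReal ρ * (Iio ρ).indicator (fun r ↦ ENNReal.ofReal r ^ j) r := by
  by_cases hr : r < ρ
  · obtain ⟨s, hs⟩ := exists_add_of_le (hgM r)
    obtain ⟨t, ht⟩ := exists_add_of_le (ENNReal.ofReal_le_ofReal hr.le)
    simp only [indicator_of_mem (mem_Iio.2 hr), hs, ht]
    exact le_self_add.trans_eq (by ring : _ + s * t * ENNReal.ofReal r ^ j = _)
  · simp only [indicator_of_notMem (notMem_Iio.2 (not_lt.1 hr)), mul_zero, add_zero]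
    rw [← mul_assoc, pow_succ']
    gcongr
    exact not_lt.1 hr

theorem bathtub_of_le (hg : Measurable g) (hM : M ≠ ∞) (hgM : ∀ r, g r ≤ M) {ρ : ℝ} (hρ : 0 < ρ)
    (hle : (j + 2) * ∫⁻ r in Ioi (0 : ℝ), ENNReal.ofReal r ^ (j + 1) * g r ≤
      M * ENNReal.ofReal ρ ^ (j + 2)) :
    (j + 1) * ∫⁻ r in Ioi (0 : ℝ), ENNReal.ofReal r ^ j * g r ≤ M * ENNReal.ofReal ρ ^ (j + 1) := by
  have hpos : ENNReal.ofReal ρ ≠ 0 := by simpa using hρ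
  have hint := lintegral_mono (μ := volume.restrict (Ioi 0)) (bathtub_pointwise j hgM ρ)
  have hmeas (i : ℕ) : Measurable ((Iio ρ).indicator fun r ↦ ENNReal.ofReal r ^ i) :=
    (by fun_prop : Measurable _).indicator measurableSet_Iio
  rw [lintegral_add_left (by fun_prop), lintegral_add_left (by fun_prop),
    lintegral_const_mul _ (by fun_prop), lintegral_const_mul _ (hmeas _),
    lintegral_const_mul _ (hmeas _)] at hint
  have hpow := lintegral_ofReal_pow_indicator j hρ
  have hpow' := lintegral_ofReal_pow_indicator (j + 1) hρ
  rw [Nat.cast_succ, add_assoc, one_add_one_eq_two] at hpow'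
  set A := ∫⁻ r in Ioi (0 : ℝ), ENNReal.ofReal r ^ j * g r
  set B := ∫⁻ r in Ioi (0 : ℝ), ENNReal.ofReal r ^ (j + 1) * g r
  set I := ∫⁻ r in Ioi (0 : ℝ), (Iio ρ).indicator (fun r ↦ ENNReal.ofReal r ^ j) r
  set I' := ∫⁻ r in Ioi (0 : ℝ), (Iio ρ).indicator (fun r ↦ ENNReal.ofReal r ^ (j + 1)) r
  set R := ENNReal.ofReal ρ
  have hsum : (j + 2) * R * ((j + 1) * A) + (j + 1) * (M * R ^ (j + 2)) ≤
      (j + 2) * R * (M * R ^ (j + 1)) + (j + 1) * (M * R ^ (j + 2)) :=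
    calc (j + 2) * R * ((j + 1) * A) + (j + 1) * (M * R ^ (j + 2))
      _ = (j + 1) * (j + 2) * (R * A + M * I') := by rw [← hpow']; ring
      _ ≤ (j + 1) * (j + 2) * (B + M * R * I) := mul_le_mul_right hint _
      _ = (j + 1) * ((j + 2) * B) + (j + 2) * (M * R * ((j + 1) * I)) := by ring
      _ ≤ (j + 1) * (M * R ^ (j + 2)) + (j + 2) * (M * R * R ^ (j + 1)) := by
        rw [hpow]; gcongr
      _ = _ := by ring
  have hfin : (j + 1) * (M * R ^ (j + 2)) ≠ ∞ := by finiteness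
  refine (ENNReal.mul_le_mul_iff_right (mul_ne_zero (by simp) hpos) (by finiteness)).1
    ((ENNReal.add_le_add_iff_right hfin).1 hsum)

theorem bathtub (hg : Measurable g) (hM : M ≠ ∞) (hgM : ∀ r, g r ≤ M) :
    (j + 1) * ∫⁻ r in Ioi (0 : ℝ), ENNReal.ofReal r ^ j * g r ≤ M ^ (j + 2 : ℝ)⁻¹ *
      ((j + 2) * ∫⁻ r in Ioi (0 : ℝ), ENNReal.ofReal r ^ (j + 1) * g r) ^
        ((j + 1 : ℝ) / (j + 2)) := by
  have hj1 : (0 : ℝ) < j + 1 := by positivity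
  have hj2 : (0 : ℝ) < j + 2 := by positivity
  rcases eq_or_ne M 0 with rfl | hM0
  · simp [fun r ↦ le_zero_iff.1 (hgM r)]
  set B := (j + 2) * ∫⁻ r in Ioi (0 : ℝ), ENNReal.ofReal r ^ (j + 1) * g r with hB
  rcases eq_or_ne B 0 with hB0 | hB0
  · have hzero : g =ᵐ[volume.restrict (Ioi 0)] 0 := by
      rw [hB, mul_eq_zero, lintegral_eq_zero_iff (by fun_prop)] at hB0
      filter_upwards [hB0.resolve_left (by simp), ae_restrict_mem measurableSet_Ioi] with r hr hr0
      simpa [not_le.2 (mem_Ioi.1 hr0)] using hr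
    rw [lintegral_eq_zero_iff (by fun_prop) |>.2 (hzero.mono fun r hr ↦ by simp [hr])]
    simp
  rcases eq_or_ne B ∞ with hBtop | hBtop
  · simp [hBtop, ENNReal.top_rpow_of_pos (div_pos hj1 hj2), ENNReal.mul_top, hM0, hM]
  set R := (B / M) ^ (j + 2 : ℝ)⁻¹ with hR
  have hRtop : R ≠ ∞ := ENNReal.rpow_ne_top_of_nonneg (by positivity) (ENNReal.div_ne_top hBtop hM0)
  have hR0 : R ≠ 0 := by
    simp [hR, ENNReal.rpow_eq_zero_iff, hB0, hM, not_lt.2 hj2.le]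
  have hRpow : R ^ (j + 2) = B / M := by
    rw [hR, ← ENNReal.rpow_natCast, Nat.cast_add, Nat.cast_two, ENNReal.rpow_inv_rpow hj2.ne']
  have hle := bathtub_of_le (j := j) hg hM hgM (ENNReal.toReal_pos hR0 hRtop)
    (by rw [ENNReal.ofReal_toReal hRtop, hRpow, ENNReal.mul_div_cancel hM0 hM])
  rw [ENNReal.ofReal_toReal hRtop] at hle
  have hM_split : M = M ^ (j + 2 : ℝ)⁻¹ * M ^ ((j + 1 : ℝ) / (j + 2)) := by
    rw [← ENNReal.rpow_add _ _ hM0 hM, ← one_div, ← add_div, ← add_assoc, add_comm 1, add_assoc,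
      one_add_one_eq_two, div_self hj2.ne', ENNReal.rpow_one]
  calc (j + 1) * ∫⁻ r in Ioi (0 : ℝ), ENNReal.ofReal r ^ j * g r
    _ ≤ M * R ^ (j + 1) := hle
    _ = M ^ (j + 2 : ℝ)⁻¹ * (M ^ ((j + 1 : ℝ) / (j + 2)) * (B / M) ^ ((j + 1 : ℝ) / (j + 2))) := by
      rw [← mul_assoc, ← hM_split, hR, ← ENNReal.rpow_natCast, ← ENNReal.rpow_mul,
        inv_mul_eq_div, Nat.cast_succ]
    _ = M ^ (j + 2 : ℝ)⁻¹ * B ^ ((j + 1 : ℝ) / (j + 2)) := by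
      rw [← ENNReal.mul_rpow_of_nonneg _ _ (by positivity), ENNReal.mul_div_cancel hM0 hM]

end Bathtub

section MeanAbsInner

variable {E : Type*} [NormedAddCommGroup E] [InnerProductSpace ℝ E] [FiniteDimensional ℝ E]

/-- The average `∫ |⟪e, R e⟫| dR` over rotations; for a unit vector `e` this is the mean of
`|⟪e, ·⟫|` over the unit sphere. -/
def meanAbsInner (e : E) : ℝ≥0∞ :=
  rotationAverage (fun x ↦ ENNReal.ofReal |inner ℝ e x|) e

theorem rotationAverage_abs_inner {e : E} (he : ‖e‖ = 1) (x : E) :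
    rotationAverage (fun x ↦ ENNReal.ofReal |inner ℝ e x|) x =
      ENNReal.ofReal ‖x‖ * meanAbsInner e := by
  rw [rotationAverage_eq_of_norm_eq _ (y := ‖x‖ • e) (by simp [norm_smul, he]), meanAbsInner,
    rotationAverage, rotationAverage, ← lintegral_const_mul' _ _ ENNReal.ofReal_ne_top]
  simp [inner_smul_right, abs_mul, ENNReal.ofReal_mul (norm_nonneg x)]

theorem meanAbsInner_ne_top {e : E} (he : ‖e‖ = 1) : meanAbsInner e ≠ ∞ := by
  refine ne_top_of_le_ne_top ENNReal.one_ne_top ?_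
  calc meanAbsInner e ≤ ∫⁻ _ : RotationGroup E, 1 ∂rotationMeasure E := by
        refine lintegral_mono fun R ↦ ENNReal.ofReal_le_one.2 ?_
        have hR : ‖(R : E →L[ℝ] E) e‖ = ‖e‖ := (Unitary.linearIsometryEquiv R).norm_map e
        exact (abs_real_inner_le_norm _ _).trans_eq (by rw [hR, he, one_mul])
    _ = 1 := by simp

variable [MeasurableSpace E] [BorelSpace E] {j : ℕ}

theorem lintegral_ball_abs_inner {e : E} (he : ‖e‖ = 1) :
    ∫⁻ x : E in ball 0 1, ENNReal.ofReal |inner ℝ e x| =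
      meanAbsInner e * ∫⁻ x : E in ball 0 1, ENNReal.ofReal ‖x‖ := by
  set φ : E → ℝ≥0∞ := (ball 0 1).indicator fun x ↦ ENNReal.ofReal |inner ℝ e x| with hφ_def
  have hφ : Measurable φ := (by fun_prop : Measurable _).indicator measurableSet_ball
  have hmem (R : RotationGroup E) (x : E) : (R : E →L[ℝ] E) x ∈ ball (0 : E) 1 ↔ x ∈ ball 0 1 := by
    simp only [mem_ball_zero_iff]
    exact iff_of_eq (congrArg (· < 1) ((Unitary.linearIsometryEquiv R).norm_map x))
  have hrot (x : E) : rotationAverage φ x =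
      meanAbsInner e * (ball 0 1).indicator (fun x ↦ ENNReal.ofReal ‖x‖) x := by
    by_cases hx : x ∈ ball (0 : E) 1
    · rw [indicator_of_mem hx, mul_comm, ← rotationAverage_abs_inner he]
      exact lintegral_congr fun R ↦ indicator_of_mem ((hmem R x).2 hx) _
    · rw [indicator_of_notMem hx, mul_zero, rotationAverage]
      simp [hφ_def, indicator_of_notMem fun h ↦ hx ((hmem _ x).1 h)]
  rw [← lintegral_indicator measurableSet_ball, ← lintegral_indicator measurableSet_ball,
    ← lintegral_rotationAverage hφ, lintegral_congr hrot,
    lintegral_const_mul' _ _ (meanAbsInner_ne_top he)]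

theorem lintegral_abs_indicator_sq_lt (a : ℝ) :
    ∫⁻ s : ℝ, {s | s ^ 2 < a}.indicator (fun s ↦ ENNReal.ofReal |s|) s = ENNReal.ofReal a := by
  rcases le_or_gt a 0 with ha | ha
  · have hempty : {s : ℝ | s ^ 2 < a} = ∅ :=
      eq_empty_of_forall_notMem fun s hs ↦ (hs.trans_le ha).not_ge (sq_nonneg s)
    simp [hempty, ENNReal.ofReal_of_nonpos ha]
  have hpow := lintegral_ofReal_pow_indicator 1 (Real.sqrt_pos.2 ha)
  calc ∫⁻ s : ℝ, {s | s ^ 2 < a}.indicator (fun s ↦ ENNReal.ofReal |s|) s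
    _ = ∫⁻ s : ℝ, (Iio √a).indicator (fun r ↦ ENNReal.ofReal r ^ 1) ‖s‖ :=
      lintegral_congr fun s ↦ by simp [indicator, Real.lt_sqrt]
    _ = 2 * ∫⁻ r in Ioi (0 : ℝ), (Iio √a).indicator (fun r ↦ ENNReal.ofReal r ^ 1) r := by
      rw [lintegral_comp_norm (j := 0) (by simp)
        ((by fun_prop : Measurable _).indicator measurableSet_Iio)]
      norm_num
    _ = ENNReal.ofReal a := by
      rw [← Real.sq_sqrt ha.le, ENNReal.ofReal_pow (Real.sqrt_nonneg a), Real.sq_sqrt ha.le,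
        ← hpow]
      norm_num

theorem lintegral_ball_abs_inner_eq {e : E} (he : ‖e‖ = 1) :
    ∫⁻ x : E in ball 0 1, ENNReal.ofReal |inner ℝ e x| =
      ∫⁻ y : (ℝ ∙ e)ᗮ, ENNReal.ofReal (1 - ‖y‖ ^ 2) := by
  have hinner (s : ℝ) (y : (ℝ ∙ e)ᗮ) : inner ℝ e (s • e + y) = s := by
    rw [inner_add_right, inner_smul_right, real_inner_self_eq_norm_sq, he,
      Submodule.mem_orthogonal_singleton_iff_inner_right.1 y.2]
    simp
  have hnorm (s : ℝ) (y : (ℝ ∙ e)ᗮ) : ‖s • e + (y : E)‖ ^ 2 = s ^ 2 + ‖y‖ ^ 2 := by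
    rw [norm_add_sq_real, inner_smul_left, Submodule.mem_orthogonal_singleton_iff_inner_right.1 y.2]
    simp [norm_smul, he]
  have hfiber (s : ℝ) (y : (ℝ ∙ e)ᗮ) :
      (ball 0 1).indicator (fun x ↦ ENNReal.ofReal |inner ℝ e x|) (s • e + (y : E)) =
        {s : ℝ | s ^ 2 < 1 - ‖y‖ ^ 2}.indicator (fun s ↦ ENNReal.ofReal |s|) s := by
    simp only [indicator, mem_ball_zero_iff, mem_ofPred_eq, hinner, lt_sub_iff_add_lt, ← hnorm,
      sq_lt_one_iff₀ (norm_nonneg _)]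
  have hmeas : Measurable ((ball 0 1).indicator fun x : E ↦ ENNReal.ofReal |inner ℝ e x|) :=
    (by fun_prop : Measurable _).indicator measurableSet_ball
  have hmp := measurePreserving_smul_add_orthogonal he
  rw [← lintegral_indicator measurableSet_ball, ← hmp.lintegral_comp hmeas,
    Measure.volume_eq_prod,
    lintegral_prod_symm (μ := volume) (ν := volume) (fun p : ℝ × (ℝ ∙ e)ᗮ ↦
      (ball 0 1).indicator (fun x ↦ ENNReal.ofReal |inner ℝ e x|) (p.1 • e + (p.2 : E)))
      (hmeas.comp hmp.measurable).aemeasurable]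
  exact lintegral_congr fun y ↦
    (lintegral_congr (hfiber · y)).trans (lintegral_abs_indicator_sq_lt _)

theorem lintegral_ofReal_one_sub_norm_sq (hj : finrank ℝ E = j + 1) :
    (j + 3) * ∫⁻ x : E, ENNReal.ofReal (1 - ‖x‖ ^ 2) = 2 * volume (ball (0 : E) 1) := by
  have hball : ∫⁻ x : E, ENNReal.ofReal (1 - ‖x‖ ^ 2) =
      ∫⁻ x : E in ball 0 1, ENNReal.ofReal (1 - ‖x‖ ^ 2) := by
    refine (setLIntegral_eq_of_support_subset fun x hx ↦ ?_).symm
    simpa using hx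
  have hsum : (∫⁻ x : E in ball 0 1, ENNReal.ofReal (1 - ‖x‖ ^ 2)) +
      ∫⁻ x : E in ball 0 1, ENNReal.ofReal ‖x‖ ^ 2 = volume (ball (0 : E) 1) := by
    rw [← lintegral_add_left (by fun_prop), ← setLIntegral_one]
    refine setLIntegral_congr_fun measurableSet_ball fun x hx ↦ ?_
    have hx1 : ‖x‖ ^ 2 ≤ 1 := pow_le_one₀ (norm_nonneg x) (mem_ball_zero_iff.1 hx).le
    simp only [← ENNReal.ofReal_pow (norm_nonneg x)]
    rw [← ENNReal.ofReal_add (by linarith) (by positivity)]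
    simp
  have hsq := lintegral_ball_ofReal_norm_pow hj 2
  rw [hball]
  set A := ∫⁻ x : E in ball 0 1, ENNReal.ofReal (1 - ‖x‖ ^ 2)
  set B := ∫⁻ x : E in ball 0 1, ENNReal.ofReal ‖x‖ ^ 2
  set ω := volume (ball (0 : E) 1)
  have hω : (j + 1) * ω ≠ ∞ := ENNReal.mul_ne_top (by finiteness) measure_ball_lt_top.ne
  refine (ENNReal.add_left_inj hω).1 ?_
  calc (j + 3) * A + (j + 1) * ω
    _ = (j + 3) * A + (j + 1 + (2 : ℕ)) * B := by rw [hsq]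
    _ = (j + 3) * (A + B) := by push_cast; ring
    _ = 2 * ω + (j + 1) * ω := by rw [hsum]; ring

theorem volume_ball_eq_of_finrank_eq {F : Type*} [NormedAddCommGroup F] [InnerProductSpace ℝ F]
    [FiniteDimensional ℝ F] [MeasurableSpace F] [BorelSpace F]
    (h : finrank ℝ E = finrank ℝ F) : volume (ball (0 : E) 1) = volume (ball (0 : F) 1) := by
  let L : E ≃ₗᵢ[ℝ] F := (stdOrthonormalBasis ℝ E).equiv (stdOrthonormalBasis ℝ F) (finCongr h)
  rw [← L.measurePreserving.measure_preimage measurableSet_ball.nullMeasurableSet,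
    L.preimage_ball, L.symm.map_zero]

theorem meanAbsInner_mul_volume_ball (hj : finrank ℝ E = j + 2) {e : E} (he : ‖e‖ = 1)
    {H : Submodule ℝ E} (hH : finrank ℝ H = j + 1) :
    meanAbsInner e * ((j + 2) * volume (ball (0 : E) 1)) = 2 * volume (ball (0 : H) 1) := by
  have : Fact (finrank ℝ E = (j + 1) + 1) := ⟨hj⟩
  have he0 : e ≠ 0 := norm_ne_zero_iff.1 (by simp [he])
  have horth : finrank ℝ (ℝ ∙ e)ᗮ = j + 1 := Submodule.finrank_orthogonal_span_singleton he0
  have hnorm := lintegral_ball_ofReal_norm_pow (j := j + 1) hj 1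
  simp only [pow_one] at hnorm
  rw [volume_ball_eq_of_finrank_eq (hH.trans horth.symm), ← lintegral_ofReal_one_sub_norm_sq horth,
    ← lintegral_ball_abs_inner_eq he, lintegral_ball_abs_inner he]
  push_cast at hnorm
  calc meanAbsInner e * ((j + 2) * volume (ball (0 : E) 1))
    _ = meanAbsInner e * ((j + 1 + 1) * volume (ball (0 : E) 1)) := by ring
    _ = _ := by rw [← hnorm]; ring

theorem meanAbsInner_ne_zero (hj : finrank ℝ E = j + 2) {e : E} (he : ‖e‖ = 1) :
    meanAbsInner e ≠ 0 := fun h ↦ by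
  have : Fact (finrank ℝ E = (j + 1) + 1) := ⟨hj⟩
  have hball := meanAbsInner_mul_volume_ball hj he (Submodule.finrank_orthogonal_span_singleton
    (v := e) (norm_ne_zero_iff.1 (by simp [he])))
  rw [h, zero_mul, zero_eq_mul] at hball
  exact hball.elim two_ne_zero (measure_ball_pos _ _ one_pos).ne'

end MeanAbsInner

section Hyperplane

variable {E : Type*} [NormedAddCommGroup E] [InnerProductSpace ℝ E] [FiniteDimensional ℝ E]
  [MeasurableSpace E] [BorelSpace E] {j : ℕ}

theorem lintegral_rotationAverage_le (hj : finrank ℝ E = j + 2) {H : Submodule ℝ E}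
    (hH : finrank ℝ H = j + 1) {φ : E → ℝ≥0∞} (hφ : Measurable φ) {M : ℝ≥0∞} (hM : M ≠ ∞)
    (hφM : ∀ x, φ x ≤ M) :
    ∫⁻ y : H, rotationAverage φ y ≤ volume (ball (0 : H) 1) *
      (M ^ (j + 2 : ℝ)⁻¹ * ((∫⁻ x, φ x) / volume (ball (0 : E) 1)) ^ ((j + 1 : ℝ) / (j + 2))) := by
  have : Nontrivial E := Module.nontrivial_of_finrank_pos (R := ℝ) (by lia)
  obtain ⟨e, he⟩ := exists_norm_eq E zero_le_one
  set g : ℝ → ℝ≥0∞ := fun r ↦ rotationAverage φ (r • e)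
  have hg : Measurable g := (measurable_rotationAverage hφ).comp (by fun_prop)
  have hgM (r : ℝ) : g r ≤ M := (lintegral_mono fun _ ↦ hφM _).trans_eq (by simp)
  have hradial (x : E) : rotationAverage φ x = g ‖x‖ :=
    rotationAverage_eq_of_norm_eq φ (by simp [norm_smul, he])
  have hball : volume (ball (0 : E) 1) ≠ 0 := (measure_ball_pos _ _ one_pos).ne'
  have hE : (∫⁻ x, φ x) / volume (ball (0 : E) 1) =
      (j + 2) * ∫⁻ r in Ioi (0 : ℝ), ENNReal.ofReal r ^ (j + 1) * g r := by
    rw [← lintegral_rotationAverage hφ, lintegral_congr hradial, lintegral_comp_norm hj hg,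
      Nat.cast_succ, add_assoc, one_add_one_eq_two, mul_right_comm,
      ENNReal.mul_div_cancel_right hball measure_ball_lt_top.ne]
  calc ∫⁻ y : H, rotationAverage φ y
    _ = ∫⁻ y : H, g ‖y‖ := lintegral_congr fun y ↦ hradial y
    _ = volume (ball (0 : H) 1) *
        ((j + 1) * ∫⁻ r in Ioi (0 : ℝ), ENNReal.ofReal r ^ j * g r) := by
      rw [lintegral_comp_norm hH hg, mul_left_comm, mul_assoc]
    _ ≤ _ := by
      rw [hE]
      exact mul_le_mul_right (bathtub hg hM hgM) _

end Hyperplane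

theorem exists_finset_norm_integral_sub_sum_lt {G B : Type*} [TopologicalSpace G] [CompactSpace G]
    [MeasurableSpace G] [OpensMeasurableSpace G] (μ : Measure G) [IsProbabilityMeasure μ]
    [NormedAddCommGroup B] [NormedSpace ℝ B] [CompleteSpace B] {Φ : G → B} (hΦ : Continuous Φ)
    {δ : ℝ} (hδ : 0 < δ) :
    ∃ (ι : Type) (S : Finset ι) (w : ι → ℝ) (g : ι → G), (∀ i ∈ S, 0 ≤ w i) ∧ ∑ i ∈ S, w i = 1 ∧
      ‖∫ x, Φ x ∂μ - ∑ i ∈ S, w i • Φ (g i)‖ < δ := by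
  have hint : Integrable Φ μ :=
    hΦ.integrable_of_hasCompactSupport (HasCompactSupport.of_compactSpace Φ)
  have hmem : ∫ x, Φ x ∂μ ∈ closure (convexHull ℝ (range Φ)) :=
    (convex_convexHull ℝ _).closure.integral_mem isClosed_closure
      (.of_forall fun x ↦ subset_closure (subset_convexHull ℝ _ (mem_range_self x))) hint
  obtain ⟨b, hb, hdist⟩ := mem_closure_iff.1 hmem δ hδ
  rw [convexHull_eq] at hb
  obtain ⟨ι, S, w, z, hw, hw1, hz, rfl⟩ := hb
  have : Nonempty G := μ.nonempty_of_neZero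
  choose! g hg using hz
  refine ⟨ι, S, w, g, hw, hw1, ?_⟩
  rwa [← dist_eq_norm, Finset.sum_congr rfl fun i hi ↦ by rw [hg i hi],
    ← Finset.centerMass_eq_of_sum_1 _ _ hw1]

section Directions

variable {E : Type*} [NormedAddCommGroup E] [InnerProductSpace ℝ E] [FiniteDimensional ℝ E]
  {ι : Type*} {S : Finset ι} {v : ι → E} {ρ : ℝ}

-- Approximate `∫ |⟪e, R ·⟫| dR`, as an integral of continuous functions on the unit sphere, by a
-- convex combination of finitely many values of the integrand.
theorem exists_rotations_le_sum_abs_inner {e : E} (he : ‖e‖ = 1)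
    (hρ : ρ < (meanAbsInner e).toReal) :
    ∃ (ι : Type) (S : Finset ι) (w : ι → ℝ) (R : ι → RotationGroup E), (∀ i ∈ S, 0 ≤ w i) ∧
      ∑ i ∈ S, w i = 1 ∧
      ∀ u ∈ sphere (0 : E) 1, ρ ≤ ∑ i ∈ S, w i * |inner ℝ e ((R i : E →L[ℝ] E) u)| := by
  let F : C(RotationGroup E × sphere (0 : E) 1, ℝ) :=
    ⟨fun p ↦ |inner ℝ e ((p.1 : E →L[ℝ] E) p.2)|, by fun_prop⟩
  let Φ : C(RotationGroup E, C(sphere (0 : E) 1, ℝ)) := F.curry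
  have hmean (u : sphere (0 : E) 1) :
      (∫ R, Φ R ∂rotationMeasure E) u = (meanAbsInner e).toReal := by
    have hint : Integrable Φ (rotationMeasure E) :=
      Φ.continuous.integrable_of_hasCompactSupport (HasCompactSupport.of_compactSpace _)
    have havg := rotationAverage_abs_inner he (u : E)
    rw [mem_sphere_zero_iff_norm.1 u.2, ENNReal.ofReal_one, one_mul] at havg
    rw [← havg]
    refine ((ContinuousMap.evalCLM ℝ u).integral_comp_comm hint).symm.trans ?_
    exact integral_eq_lintegral_of_nonneg_ae (.of_forall fun R ↦ abs_nonneg _)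
      ((ContinuousMap.evalCLM ℝ u).integrable_comp hint).aestronglyMeasurable
  obtain ⟨ι, S, w, R, hw, hw1, happrox⟩ := exists_finset_norm_integral_sub_sum_lt
    (rotationMeasure E) Φ.continuous (sub_pos.2 hρ)
  refine ⟨ι, S, w, R, hw, hw1, fun u hu ↦ ?_⟩
  have happly := (abs_lt.1 <| (Real.norm_eq_abs _).symm.trans_lt <|
    (ContinuousMap.norm_coe_le_norm _ ⟨u, hu⟩).trans_lt happrox).2
  rw [ContinuousMap.sub_apply, hmean, ContinuousMap.sum_apply, sub_lt_sub_iff_left] at happly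
  exact happly.le

theorem exists_directions {e : E} (he : ‖e‖ = 1) (hρ : ρ < (meanAbsInner e).toReal) :
    ∃ (ι : Type) (S : Finset ι) (v : ι → E), ∑ i ∈ S, ‖v i‖ = 1 ∧
      ∀ x, ρ * ‖x‖ ≤ ∑ i ∈ S, |inner ℝ (v i) x| := by
  obtain ⟨ι, S, w, R, hw, hw1, hsum⟩ := exists_rotations_le_sum_abs_inner he hρ
  let L (i : ι) : E ≃ₗᵢ[ℝ] E := (Unitary.linearIsometryEquiv (R i)).symm
  refine ⟨ι, S, fun i ↦ w i • L i e, ?_, fun x ↦ ?_⟩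
  · rw [← hw1]
    exact Finset.sum_congr rfl fun i hi ↦ by simp [norm_smul, he, abs_of_nonneg (hw i hi)]
  rcases eq_or_ne x 0 with rfl | hx
  · simp
  have hx0 : 0 < ‖x‖ := norm_pos_iff.2 hx
  have hterm (i : ι) (hi : i ∈ S) : w i * |inner ℝ e ((R i : E →L[ℝ] E) (‖x‖⁻¹ • x))| =
      ‖x‖⁻¹ * |inner ℝ (w i • L i e) x| := by
    have hR : inner ℝ e ((R i : E →L[ℝ] E) x) = inner ℝ (L i e) x :=
      (LinearIsometryEquiv.inner_map_eq_flip (L i) e x).symm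
    rw [map_smul, inner_smul_right, hR, real_inner_smul_left, abs_mul, abs_mul,
      abs_of_nonneg (hw i hi), abs_of_pos (inv_pos.2 hx0), mul_left_comm]
  have hle := hsum (‖x‖⁻¹ • x) (by simp [norm_smul, hx0.ne'])
  rwa [Finset.sum_congr rfl hterm, ← Finset.mul_sum, le_inv_mul_iff₀ hx0, mul_comm] at hle

theorem closedBall_subset_zonotope (h : ∀ x, ρ * ‖x‖ ≤ ∑ i ∈ S, |inner ℝ (v i) x|) :
    closedBall 0 ρ ⊆ zonotope S v := by
  intro x hx
  by_contra hxz
  obtain ⟨f, u, hlt, hgt⟩ := geometric_hahn_banach_closed_point (convex_zonotope (S := S) (v := v))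
    isCompact_zonotope.isClosed hxz
  obtain ⟨a, rfl⟩ := (InnerProductSpace.toDual ℝ E).surjective f
  simp only [InnerProductSpace.toDual_apply_apply] at hlt hgt
  let z : E := ∑ i ∈ S, (SignType.sign (inner ℝ (v i) a) : ℝ) • v i
  have hz : z ∈ zonotope S v := finsetSum_mem_finsetSum _ _ _ fun i _ ↦ by
    have : (SignType.sign (inner ℝ (v i) a) : ℝ) ∈ Icc (-1 : ℝ) 1 := by
      rcases SignType.sign (inner ℝ (v i) a) <;> simp
    have hseg := segment_neg_smul_self (e := v i) zero_le_one
    rw [one_smul] at hseg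
    exact hseg ▸ mem_image_of_mem _ this
  have haz : inner ℝ a z = ∑ i ∈ S, |inner ℝ (v i) a| := by
    simp only [z, inner_sum, inner_smul_right, real_inner_comm (v _) a, sign_mul_self]
  have hax : inner ℝ a x ≤ ρ * ‖a‖ :=
    calc inner ℝ a x ≤ ‖a‖ * ‖x‖ := real_inner_le_norm a x
      _ ≤ ‖a‖ * ρ := by gcongr; simpa using hx
      _ = ρ * ‖a‖ := mul_comm _ _
  linarith [h a, hlt z hz]

theorem closedBall_subset_zonotope_map (h : ∀ x, ρ * ‖x‖ ≤ ∑ i ∈ S, |inner ℝ (v i) x|)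
    (L : E ≃ₗᵢ[ℝ] E) : closedBall 0 ρ ⊆ zonotope S fun i ↦ L (v i) :=
  closedBall_subset_zonotope fun x ↦ by
    simpa only [L.inner_map_eq_flip, L.symm.norm_map] using h (L.symm x)

end Directions

section LayerCake

variable {α : Type*} [MeasurableSpace α] (μ : Measure α) {p : ℝ}

theorem lintegral_rpow_rpow_inv_le_of_ne_top [SFinite μ] {f : α → ℝ≥0∞} (hf : Measurable f)
    (hp : 1 < p) (hfin : ∫⁻ x, f x ^ p ∂μ ≠ ∞) :
    (∫⁻ x, f x ^ p ∂μ) ^ p⁻¹ ≤ ∫⁻ t in Ioi (0 : ℝ), μ {x | ENNReal.ofReal t < f x} ^ p⁻¹ := by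
  have hpq := Real.HolderConjugate.conjExponent hp
  set q := Real.conjExponent p
  set X := ∫⁻ x, f x ^ p ∂μ
  have hq : 0 ≤ q⁻¹ := hpq.symm.inv_nonneg
  rcases eq_or_ne X 0 with h0 | h0
  · simp [h0, hpq.pos]
  set ν := μ.withDensity fun x ↦ f x ^ (p - 1)
  have hXν : X = ∫⁻ x, f x ∂ν := by
    rw [lintegral_withDensity_eq_lintegral_mul _ (by fun_prop) hf]
    refine lintegral_congr fun x ↦ ?_
    simpa using ENNReal.rpow_add_of_nonneg (x := f x) (p - 1) 1 (sub_nonneg.2 hp.le) zero_le_one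
  have hν (t : ℝ) :
      ν {x | ENNReal.ofReal t < f x} ≤ μ {x | ENNReal.ofReal t < f x} ^ p⁻¹ * X ^ q⁻¹ := by
    have hholder := ENNReal.lintegral_mul_le_Lp_mul_Lq (μ.restrict {x | ENNReal.ofReal t < f x}) hpq
      (f := 1) (g := fun x ↦ f x ^ (p - 1)) aemeasurable_const (by fun_prop)
    simp only [one_mul, one_div, Pi.one_apply, ENNReal.one_rpow, lintegral_const,
      Measure.restrict_apply_univ, ← ENNReal.rpow_mul, hpq.sub_one_mul_conj] at hholder
    rw [withDensity_apply _ (measurableSet_lt measurable_const hf)]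
    refine hholder.trans ?_
    gcongr
    exact setLIntegral_le_lintegral _ _
  have hXq : X ^ q⁻¹ ≠ ∞ := ENNReal.rpow_ne_top_of_nonneg hq hfin
  have hXq0 : X ^ q⁻¹ ≠ 0 := by simp [ENNReal.rpow_eq_zero_iff, h0, hfin]
  refine (ENNReal.mul_le_mul_iff_left hXq0 hXq).1 ?_
  calc X ^ p⁻¹ * X ^ q⁻¹
    _ = ∫⁻ t in Ioi (0 : ℝ), ν {x | ENNReal.ofReal t < f x} := by
      rw [← ENNReal.rpow_add _ _ h0 hfin, hpq.inv_add_inv_eq_one, ENNReal.rpow_one, hXν,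
        lintegral_eq_lintegral_meas_ofReal_lt ν hf.aemeasurable]
    _ ≤ ∫⁻ t in Ioi (0 : ℝ), μ {x | ENNReal.ofReal t < f x} ^ p⁻¹ * X ^ q⁻¹ := lintegral_mono hν
    _ = _ := lintegral_mul_const' _ _ hXq

theorem lintegral_rpow_rpow_inv_le [SigmaFinite μ] (f : α → ℝ≥0∞) (hp : 1 < p) :
    (∫⁻ x, f x ^ p ∂μ) ^ p⁻¹ ≤ ∫⁻ t in Ioi (0 : ℝ), μ {x | ENNReal.ofReal t < f x} ^ p⁻¹ := by
  have hp0 : 0 < p := one_pos.trans hp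
  rw [ENNReal.rpow_inv_le_iff hp0]
  refine le_of_forall_lt_imp_le_of_dense fun L hL ↦ ?_
  rw [lintegral_eq_nnreal] at hL
  obtain ⟨g₀, hg₀, hL⟩ := by simpa only [lt_iSup_iff] using hL
  rw [← SimpleFunc.lintegral_eq_lintegral, SimpleFunc.coe_map] at hL
  obtain ⟨g, hg, hgtop, hLg⟩ := SimpleFunc.exists_lt_lintegral_simpleFunc_of_lt_lintegral hL
  have hgpow (x : α) : ((g x : ℝ≥0∞) ^ p⁻¹) ^ p = g x := ENNReal.rpow_inv_rpow hp0.ne' _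
  have hgf (x : α) : (g x : ℝ≥0∞) ^ p⁻¹ ≤ f x :=
    (ENNReal.rpow_inv_le_iff hp0).2 ((ENNReal.coe_le_coe.2 (hg x)).trans (hg₀ x))
  have hle := lintegral_rpow_rpow_inv_le_of_ne_top μ (f := fun x ↦ (g x : ℝ≥0∞) ^ p⁻¹)
    (by fun_prop) hp (by simpa only [hgpow] using hgtop.ne)
  simp only [hgpow] at hle
  refine hLg.le.trans (((ENNReal.rpow_inv_le_iff hp0).1 hle).trans ?_)
  gcongr with t x
  exact hgf x

end LayerCake

/-! ### Projections of quasiconcave functions and the hyperplane inequality -/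

section ProjSup

variable {E : Type*} [NormedAddCommGroup E] [InnerProductSpace ℝ E] {F : E → ℝ≥0∞}

/-- The projection `P_W F` of a function `F` to a subspace `W`: its supremum over the fibres of the
orthogonal projection to `W`. -/
def projSup (W : Submodule ℝ E) (F : E → ℝ≥0∞) (y : W) : ℝ≥0∞ :=
  ⨆ z : Wᗮ, F (y + z)

theorem setOf_lt_projSup (W : Submodule ℝ E) [W.HasOrthogonalProjection] (F : E → ℝ≥0∞)
    (c : ℝ≥0∞) : {y | c < projSup W F y} = shadow W {x | c < F x} := by
  ext y
  simp [projSup, mem_shadow_iff, lt_iSup_iff]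

theorem quasiconcaveOn_projSup (W : Submodule ℝ E) [W.HasOrthogonalProjection]
    (hF : QuasiconcaveOn ℝ univ F) : QuasiconcaveOn ℝ univ (projSup W F) := by
  refine quasiconcaveOn_iff_min_le.2 ⟨convex_univ, fun x _ y _ a b ha hb hab ↦
    le_of_forall_lt fun c hc ↦ ?_⟩
  have hconv : Convex ℝ {y | c < projSup W F y} := by
    have hlevel : Convex ℝ {x | c < F x} := by simpa using hF.convex_gt c
    exact setOf_lt_projSup W F c ▸ hlevel.linear_image W.orthogonalProjectionOnto.toLinearMap
  exact hconv (lt_min_iff.1 hc).1 (lt_min_iff.1 hc).2 ha hb hab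

theorem quasiconcaveOn_rpow (hF : QuasiconcaveOn ℝ univ F) {a : ℝ} (ha : 0 ≤ a) :
    QuasiconcaveOn ℝ univ fun x ↦ F x ^ a :=
  hF.monotone_comp (ENNReal.monotone_rpow_of_nonneg ha)

theorem projSup_rpow_le (H : Submodule ℝ E) (F : E → ℝ≥0∞) {a : ℝ} (ha : 0 ≤ a) (y : H) :
    projSup H (fun x ↦ F x ^ a) y ≤ projSup H F y ^ a :=
  iSup_le fun z ↦ ENNReal.rpow_le_rpow (le_iSup (fun z : Hᗮ ↦ F (y + z)) z) ha

variable [FiniteDimensional ℝ E] [MeasurableSpace E] [BorelSpace E]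

theorem aemeasurable_of_quasiconcaveOn (hF : QuasiconcaveOn ℝ univ F) : AEMeasurable F := by
  have hnull : NullMeasurable F volume :=
    measurable_of_Ioi (δ := NullMeasurableSpace E volume) fun c ↦ by
      have hlevel : Convex ℝ {x | c < F x} := by simpa using hF.convex_gt c
      exact hlevel.nullMeasurableSet _
  exact hnull.aemeasurable

theorem lintegral_projSup (W : Submodule ℝ E) (hF : QuasiconcaveOn ℝ univ F) :
    ∫⁻ y, projSup W F y =
      ∫⁻ t in Ioi (0 : ℝ), volume (shadow W {x | ENNReal.ofReal t < F x}) := by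
  rw [lintegral_eq_lintegral_meas_ofReal_lt _
    (aemeasurable_of_quasiconcaveOn (quasiconcaveOn_projSup W hF))]
  simp_rw [setOf_lt_projSup]

theorem isoperimetric_projSup {d : ℕ} (hd : finrank ℝ E = d + 1) (hd0 : 0 < d)
    (hF : QuasiconcaveOn ℝ univ F) {ι : Type*} {S : Finset ι} {v : ι → E} {B : Set E}
    (hB : IsCompact B) (hBv : B ⊆ zonotope S v) :
    (d + 1) * (∫⁻ x, F x ^ ((d + 1 : ℝ) / d)) ^ ((d : ℝ) / (d + 1)) * volume B ^ (d + 1 : ℝ)⁻¹ ≤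
      ∑ i ∈ S, ENNReal.ofReal (2 * ‖v i‖) * ∫⁻ y, projSup (ℝ ∙ v i)ᗮ F y := by
  have hd0' : (0 : ℝ) < d := Nat.cast_pos.2 hd0
  have hlayer := lintegral_rpow_rpow_inv_le volume F ((one_lt_div hd0').2 (lt_add_one (d : ℝ)))
  rw [inv_div] at hlayer
  have hBfin : volume B ^ (d + 1 : ℝ)⁻¹ ≠ ∞ :=
    ENNReal.rpow_ne_top_of_nonneg (by positivity) hB.measure_lt_top.ne
  have hmeas (i : ι) :
      Measurable fun t : ℝ ↦ volume (shadow (ℝ ∙ v i)ᗮ {x | ENNReal.ofReal t < F x}) := by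
    simpa only [setOf_lt_projSup] using
      (antitone_meas_ofReal_lt volume (projSup (ℝ ∙ v i)ᗮ F)).measurable
  calc (d + 1) * (∫⁻ x, F x ^ ((d + 1 : ℝ) / d)) ^ ((d : ℝ) / (d + 1)) * volume B ^ (d + 1 : ℝ)⁻¹
      ≤ (d + 1) * (∫⁻ t in Ioi (0 : ℝ), volume {x | ENNReal.ofReal t < F x} ^ ((d : ℝ) / (d + 1))) *
          volume B ^ (d + 1 : ℝ)⁻¹ := by gcongr
    _ = ∫⁻ t in Ioi (0 : ℝ), (d + 1) * volume {x | ENNReal.ofReal t < F x} ^ ((d : ℝ) / (d + 1)) *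
          volume B ^ (d + 1 : ℝ)⁻¹ := by
        rw [← lintegral_const_mul' _ _ (by finiteness), ← lintegral_mul_const' _ _ hBfin]
    _ ≤ ∫⁻ t in Ioi (0 : ℝ), ∑ i ∈ S, ENNReal.ofReal (2 * ‖v i‖) *
          volume (shadow (ℝ ∙ v i)ᗮ {x | ENNReal.ofReal t < F x}) :=
        lintegral_mono fun t ↦
          isoperimetric_zonotope hd hd0 (by simpa using hF.convex_gt (ENNReal.ofReal t)) hB hBv
    _ = ∑ i ∈ S, ENNReal.ofReal (2 * ‖v i‖) * ∫⁻ y, projSup (ℝ ∙ v i)ᗮ F y := by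
        rw [lintegral_finsetSum _ fun i _ ↦ (hmeas i).const_mul _]
        exact Finset.sum_congr rfl fun i _ ↦ by
          rw [lintegral_const_mul _ (hmeas i), lintegral_projSup _ hF]

variable {d : ℕ} {G : E → ℝ≥0∞} {X : ℝ≥0∞}

-- Apply the isoperimetric inequality to all rotations of a zonotope that is close to a ball of
-- radius `meanAbsInner e`, and average.
theorem isoperimetric_projSup_closedBall (hd : finrank ℝ E = d + 1) (hd0 : 0 < d)
    (hF : QuasiconcaveOn ℝ univ F) (hG : Measurable G)
    (hFG : ∀ H : Submodule ℝ E, finrank ℝ H = d → ∫⁻ y, projSup H F y ≤ ∫⁻ y : H, G y)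
    (hX : ∀ H : Submodule ℝ E, finrank ℝ H = d → 2 * ∫⁻ y : H, rotationAverage G y ≤ X)
    {e : E} (he : ‖e‖ = 1) {ρ : ℝ} (hρ : ρ < (meanAbsInner e).toReal) :
    (d + 1) * (∫⁻ x, F x ^ ((d + 1 : ℝ) / d)) ^ ((d : ℝ) / (d + 1)) *
      volume (closedBall (0 : E) ρ) ^ (d + 1 : ℝ)⁻¹ ≤ X := by
  have : Fact (finrank ℝ E = d + 1) := ⟨hd⟩
  obtain ⟨ι, S, v, hv1, hv⟩ := exists_directions he hρ
  set A := (d + 1) * (∫⁻ x, F x ^ ((d + 1 : ℝ) / d)) ^ ((d : ℝ) / (d + 1)) *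
    volume (closedBall (0 : E) ρ) ^ (d + 1 : ℝ)⁻¹
  let s (i : ι) (R : RotationGroup E) : ℝ≥0∞ :=
    ∫⁻ y : (ℝ ∙ v i)ᗮ.map (R : E →L[ℝ] E).toLinearMap, G y
  have hrot (R : RotationGroup E) : A ≤ ∑ i ∈ S, ENNReal.ofReal (2 * ‖v i‖) * s i R := by
    let L : E ≃ₗᵢ[ℝ] E := Unitary.linearIsometryEquiv R
    refine (isoperimetric_projSup hd hd0 hF (isCompact_closedBall 0 ρ)
      (closedBall_subset_zonotope_map hv L)).trans (Finset.sum_le_sum fun i _ ↦ ?_)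
    rw [L.norm_map]
    simp only [s]
    rcases eq_or_ne (v i) 0 with hvi | hvi
    · simp [hvi]
    gcongr
    refine (hFG _ (Submodule.finrank_orthogonal_span_singleton (by simpa using hvi))).trans_eq ?_
    rw [show (ℝ ∙ L (v i))ᗮ = _ from orthogonal_span_rotation R (v i)]
  calc A = ∫⁻ _ : RotationGroup E, A ∂rotationMeasure E := by simp
    _ ≤ ∫⁻ R, ∑ i ∈ S, ENNReal.ofReal (2 * ‖v i‖) * s i R ∂rotationMeasure E := lintegral_mono hrot
    _ = ∑ i ∈ S, ENNReal.ofReal (2 * ‖v i‖) * ∫⁻ y : (ℝ ∙ v i)ᗮ, rotationAverage G y := by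
        have hs (i : ι) : Measurable (s i) := measurable_lintegral_map_rotation hG _
        rw [lintegral_finsetSum _ fun i _ ↦ (hs i).const_mul _]
        exact Finset.sum_congr rfl fun i _ ↦ by
          rw [lintegral_const_mul _ (hs i), lintegral_lintegral_map_rotation hG]
    _ ≤ ∑ i ∈ S, ENNReal.ofReal ‖v i‖ * X := by
        refine Finset.sum_le_sum fun i _ ↦ ?_
        rcases eq_or_ne (v i) 0 with hvi | hvi
        · simp [hvi]
        rw [mul_comm 2, ENNReal.ofReal_mul (norm_nonneg _), ENNReal.ofReal_ofNat, mul_assoc]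
        gcongr
        exact hX _ (Submodule.finrank_orthogonal_span_singleton hvi)
    _ = X := by
        rw [← Finset.sum_mul, ← ENNReal.ofReal_sum_of_nonneg fun i _ ↦ norm_nonneg _, hv1,
          ENNReal.ofReal_one, one_mul]

theorem meanAbsInner_mul_le (hd : finrank ℝ E = d + 1) (hd0 : 0 < d)
    (hF : QuasiconcaveOn ℝ univ F) (hG : Measurable G)
    (hFG : ∀ H : Submodule ℝ E, finrank ℝ H = d → ∫⁻ y, projSup H F y ≤ ∫⁻ y : H, G y)
    (hX : ∀ H : Submodule ℝ E, finrank ℝ H = d → 2 * ∫⁻ y : H, rotationAverage G y ≤ X)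
    {e : E} (he : ‖e‖ = 1) :
    meanAbsInner e * ((d + 1) * (∫⁻ x, F x ^ ((d + 1 : ℝ) / d)) ^ ((d : ℝ) / (d + 1)) *
      volume (ball (0 : E) 1) ^ (d + 1 : ℝ)⁻¹) ≤ X := by
  have hc := meanAbsInner_ne_top he
  refine ENNReal.mul_le_of_forall_lt fun a ha b hb ↦ ?_
  have ha_top : a ≠ ∞ := ha.ne_top
  have hball : volume (closedBall (0 : E) a.toReal) ^ (d + 1 : ℝ)⁻¹ =
      a * volume (ball (0 : E) 1) ^ (d + 1 : ℝ)⁻¹ := by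
    rw [Measure.addHaar_closedBall _ _ ENNReal.toReal_nonneg, hd,
      ENNReal.ofReal_pow ENNReal.toReal_nonneg, ENNReal.ofReal_toReal ha_top,
      ENNReal.mul_rpow_of_nonneg _ _ (by positivity), ← Nat.cast_add_one,
      ENNReal.pow_rpow_inv_natCast d.succ_ne_zero]
  have hiso := isoperimetric_projSup_closedBall hd hd0 hF hG hFG hX he
    ((ENNReal.toReal_lt_toReal ha_top hc).2 ha)
  rw [hball, mul_left_comm] at hiso
  exact (mul_le_mul_right hb.le a).trans hiso

theorem mul_mul_div_rpow {ω : ℝ≥0∞} (hω0 : ω ≠ 0) (hω : ω ≠ ∞) (A I : ℝ≥0∞) {s : ℝ} (hs : 0 ≤ s) :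
    ω * (A * (I / ω) ^ s) = A * I ^ s * ω ^ (1 - s) := by
  rw [ENNReal.div_rpow_of_nonneg _ _ hs, ENNReal.rpow_sub _ _ hω0 hω, ENNReal.rpow_one]
  simp only [div_eq_mul_inv]
  ring

theorem lintegral_rpow_rpow_le_of_projSup (hd : finrank ℝ E = d + 1) (hd0 : 0 < d)
    (hF : QuasiconcaveOn ℝ univ F) (hG : Measurable G) {M : ℝ≥0∞} (hM : M ≠ ∞)
    (hGM : ∀ x, G x ≤ M)
    (hFG : ∀ H : Submodule ℝ E, finrank ℝ H = d → ∫⁻ y, projSup H F y ≤ ∫⁻ y : H, G y) :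
    (∫⁻ x, F x ^ ((d + 1 : ℝ) / d)) ^ ((d : ℝ) / (d + 1)) ≤
      M ^ (d + 1 : ℝ)⁻¹ * (∫⁻ x, G x) ^ ((d : ℝ) / (d + 1)) := by
  obtain ⟨j, rfl⟩ : ∃ j, d = j + 1 := ⟨d - 1, by lia⟩
  have : Fact (finrank ℝ E = (j + 1) + 1) := ⟨hd⟩
  have : Nontrivial E := Module.nontrivial_of_finrank_pos (R := ℝ) (by lia)
  obtain ⟨e, he⟩ := exists_norm_eq E zero_le_one
  have hc := meanAbsInner_ne_top he
  set c := meanAbsInner e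
  set ω := volume (ball (0 : E) 1)
  have hreal : ((j + 1 : ℕ) + 1 : ℝ) = j + 2 := by push_cast; ring
  have hennreal : ((j + 1 : ℕ) + 1 : ℝ≥0∞) = j + 2 := by push_cast; ring
  rw [hreal, Nat.cast_add_one]
  set Φ := (∫⁻ x, F x ^ ((j + 2 : ℝ) / (j + 1))) ^ ((j + 1 : ℝ) / (j + 2))
  set I := ∫⁻ x, G x
  have hω0 : ω ≠ 0 := (measure_ball_pos _ _ one_pos).ne'
  have hω : ω ≠ ∞ := measure_ball_lt_top.ne
  have hc0 : c ≠ 0 := meanAbsInner_ne_zero hd he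
  have hmean : c * ((j + 2) * (Φ * ω ^ (j + 2 : ℝ)⁻¹)) ≤
      c * ((j + 2) * (ω * (M ^ (j + 2 : ℝ)⁻¹ * (I / ω) ^ ((j + 1 : ℝ) / (j + 2))))) := by
    have hmean := meanAbsInner_mul_le hd hd0 hF hG hFG (X := c * ((j + 2) * ω) *
      (M ^ (j + 2 : ℝ)⁻¹ * (I / ω) ^ ((j + 1 : ℝ) / (j + 2)))) (fun H hH ↦ ?_) he
    · rw [hreal, hennreal, Nat.cast_add_one] at hmean
      convert! hmean using 1 <;> ring
    · rw [meanAbsInner_mul_volume_ball hd he hH, mul_assoc]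
      gcongr
      exact lintegral_rotationAverage_le hd hH hG hM hGM
  have hcancel : Φ * ω ^ (j + 2 : ℝ)⁻¹ ≤
      ω * (M ^ (j + 2 : ℝ)⁻¹ * (I / ω) ^ ((j + 1 : ℝ) / (j + 2))) :=
    (ENNReal.mul_le_mul_iff_right (by simp) (by finiteness)).1 <|
      (ENNReal.mul_le_mul_iff_right hc0 hc).1 hmean
  rw [mul_mul_div_rpow hω0 hω _ _ (by positivity),
    show 1 - (j + 1 : ℝ) / (j + 2) = (j + 2 : ℝ)⁻¹ by field_simp; ring] at hcancel
  refine (ENNReal.mul_le_mul_iff_left ?_ ?_).1 hcancel <;>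
    simp [ENNReal.rpow_eq_zero_iff, ENNReal.rpow_eq_top_iff, hω0, hω]

theorem lintegral_rpow_le_of_projSup_hyperplane (hd : finrank ℝ E = d + 1) (hd0 : 0 < d)
    (hF : QuasiconcaveOn ℝ univ F) (hG : Measurable G) {M : ℝ≥0∞} (hM : M ≠ ∞)
    (hGM : ∀ x, G x ≤ M)
    (hFG : ∀ H : Submodule ℝ E, finrank ℝ H = d → ∫⁻ y, projSup H F y ≤ ∫⁻ y : H, G y) :
    ∫⁻ x, F x ^ ((d + 1 : ℝ) / d) ≤ M ^ (d : ℝ)⁻¹ * ∫⁻ x, G x := by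
  have hle := lintegral_rpow_rpow_le_of_projSup hd hd0 hF hG hM hGM hFG
  have hexp : (0 : ℝ) < d / (d + 1) := by positivity
  rw [← ENNReal.le_rpow_inv_iff hexp, ENNReal.mul_rpow_of_nonneg _ _ (by positivity),
    ← ENNReal.rpow_mul, ← ENNReal.rpow_mul, mul_inv_cancel₀ hexp.ne', ENNReal.rpow_one] at hle
  convert hle using 3
  field_simp

end ProjSup

section Subspace

variable {E : Type*} [NormedAddCommGroup E] [InnerProductSpace ℝ E] [FiniteDimensional ℝ E]
  [MeasurableSpace E] [BorelSpace E]

theorem lintegral_top_submodule (φ : E → ℝ≥0∞) :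
    ∫⁻ y : (⊤ : Submodule ℝ E), φ y = ∫⁻ x, φ x := by
  let e := LinearIsometryEquiv.ofTop E (⊤ : Submodule ℝ E) rfl
  exact e.measurePreserving.lintegral_comp_emb e.toHomeomorph.measurableEmbedding φ

theorem lintegral_projSup_projSup_le (F : E → ℝ≥0∞) (H : Submodule ℝ E) (K : Submodule ℝ H) :
    ∫⁻ y, projSup K (projSup H F) y ≤ ∫⁻ y, projSup (K.map H.subtype) F y := by
  refine le_of_le_of_eq (lintegral_mono fun y ↦ ?_)
    (lintegral_map_linearIsometry H.subtypeₗᵢ K fun x ↦ ⨆ z : (K.map H.subtype)ᗮ, F (x + z)).symm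
  refine iSup_le fun w ↦ iSup_le fun z ↦ ?_
  have hmem : ((w : H) : E) + z ∈ (K.map H.subtype)ᗮ := by
    rintro _ ⟨u, hu, rfl⟩
    have huw : inner ℝ (u : E) (w : H) = 0 := w.2 u hu
    have huz : inner ℝ (u : E) (z : E) = 0 := z.2 u u.2
    rw [Submodule.subtype_apply, inner_add_right, huw, huz, add_zero]
  refine le_iSup_of_le ⟨_, hmem⟩ (le_of_eq ?_)
  simp [add_assoc]

variable {F G : E → ℝ≥0∞} {k : ℕ}

theorem lintegral_le_of_projSup_top
    (hFG : ∫⁻ y, projSup ⊤ F y ≤ ∫⁻ y : (⊤ : Submodule ℝ E), G y) : ∫⁻ x, F x ≤ ∫⁻ x, G x :=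
  calc ∫⁻ x, F x = ∫⁻ y : (⊤ : Submodule ℝ E), F y := (lintegral_top_submodule F).symm
    _ ≤ ∫⁻ y, projSup ⊤ F y := lintegral_mono fun y ↦ le_iSup_of_le 0 (by simp)
    _ ≤ ∫⁻ y : (⊤ : Submodule ℝ E), G y := hFG
    _ = ∫⁻ x, G x := lintegral_top_submodule G

theorem lintegral_projSup_projSup_le_lintegral
    (hFG : ∀ H : Submodule ℝ E, finrank ℝ H = k → ∫⁻ y, projSup H F y ≤ ∫⁻ y : H, G y)
    (H : Submodule ℝ E) (K : Submodule ℝ H) (hK : finrank ℝ K = k) :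
    ∫⁻ y, projSup K (projSup H F) y ≤ ∫⁻ y : K, G (y : H) :=
  calc ∫⁻ y, projSup K (projSup H F) y
      ≤ ∫⁻ y, projSup (K.map H.subtype) F y := lintegral_projSup_projSup_le F H K
    _ ≤ ∫⁻ y : K.map H.subtype, G y := hFG _ ((Submodule.finrank_map_subtype_eq H K).trans hK)
    _ = ∫⁻ y : K, G (y : H) := lintegral_map_linearIsometry H.subtypeₗᵢ K G

-- Induction on the codimension `i`: the bound for hyperplanes `H` turns the hypothesis on
-- `k`-dimensional subspaces into the hyperplane hypothesis for `F ^ ((k + i) / k)`.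
theorem lintegral_rpow_le_of_projSup {M : ℝ≥0∞} {i : ℕ} (hk : 0 < k)
    (hi : finrank ℝ E = k + i) (hF : QuasiconcaveOn ℝ univ F) (hG : Measurable G) (hM : M ≠ ∞)
    (hGM : ∀ x, G x ≤ M)
    (hFG : ∀ H : Submodule ℝ E, finrank ℝ H = k → ∫⁻ y, projSup H F y ≤ ∫⁻ y : H, G y) :
    ∫⁻ x, F x ^ ((k + i : ℝ) / k) ≤ M ^ ((i : ℝ) / k) * ∫⁻ x, G x := by
  induction i generalizing E with
  | zero =>
    simp only [Nat.cast_zero, add_zero, zero_div, ENNReal.rpow_zero, one_mul,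
      div_self (Nat.cast_ne_zero.2 hk.ne' : (k : ℝ) ≠ 0), ENNReal.rpow_one]
    exact lintegral_le_of_projSup_top (hFG ⊤ (by rw [finrank_top, hi, add_zero]))
  | succ i ih =>
    set a := (k + i : ℝ) / k
    have ha : 0 ≤ a := by positivity
    set N := M ^ ((i : ℝ) / k)
    have hN : N ≠ ∞ := ENNReal.rpow_ne_top_of_nonneg (by positivity) hM
    have hhyperplane (H : Submodule ℝ E) (hH : finrank ℝ H = k + i) :
        ∫⁻ y, projSup H (fun x ↦ F x ^ a) y ≤ ∫⁻ y : H, N * G y := by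
      rw [lintegral_const_mul' _ _ hN]
      refine (lintegral_mono (projSup_rpow_le H F ha)).trans <|
        ih hH (quasiconcaveOn_projSup H hF) (hG.comp measurable_subtype_coe) (fun y ↦ hGM y)
          (lintegral_projSup_projSup_le_lintegral hFG H)
    have hcodim := lintegral_rpow_le_of_projSup_hyperplane (d := k + i) (by rw [hi, add_assoc])
      (by lia) (quasiconcaveOn_rpow hF ha) (hG.const_mul N) (ENNReal.mul_ne_top hN hM)
      (fun x ↦ mul_le_mul_right (hGM x) N) hhyperplane
    rw [lintegral_const_mul' _ _ hN, ← mul_assoc] at hcodim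
    convert hcodim using 2
    · ext x
      rw [← ENNReal.rpow_mul]
      congr 1
      simp only [a]
      push_cast
      field_simp
      ring
    · rw [show N * M = M ^ ((i : ℝ) / k + 1) by
          rw [ENNReal.rpow_add_of_nonneg _ _ (by positivity) zero_le_one, ENNReal.rpow_one],
        ← ENNReal.rpow_mul, ← ENNReal.rpow_add_of_nonneg _ _ (by positivity) (by positivity)]
      congr 1
      push_cast
      field_simp
      ring

end Subspace

/-! ### Exponential decay of integrable log-concave functions -/

section Decay

variable {E : Type*} [NormedAddCommGroup E] [InnerProductSpace ℝ E] {K : Set E} {x x₀ : E} {r : ℝ}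

theorem ball_lineMap_subset_of_convex (hK : Convex ℝ K) (hball : ball x₀ r ⊆ K) (hx : x ∈ K)
    {s : ℝ} (hs0 : 0 ≤ s) (hs1 : s < 1) :
    ball (AffineMap.lineMap x₀ x s) ((1 - s) * r) ⊆ K := by
  intro w hw
  have hs : 0 < 1 - s := sub_pos.2 hs1
  set u := w - AffineMap.lineMap x₀ x s with hu
  have hmem : x₀ + (1 - s)⁻¹ • u ∈ K := by
    apply hball
    rwa [mem_ball_iff_norm, add_sub_cancel_left, norm_smul, norm_inv, Real.norm_of_nonneg hs.le,
      inv_mul_lt_iff₀ hs, hu, ← mem_ball_iff_norm]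
  convert! hK hmem hx hs.le hs0 (by ring) using 1
  rw [smul_add, smul_inv_smul₀ hs.ne', hu, AffineMap.lineMap_apply_module]
  module

variable [FiniteDimensional ℝ E] [MeasurableSpace E] [BorelSpace E]

-- A point of `K` far away from `x₀` would produce many disjoint balls of radius `r / 2` in `K`.
theorem exists_forall_norm_sub_lt_of_convex (hK : Convex ℝ K) (hr : 0 < r)
    (hball : ball x₀ r ⊆ K) (hfin : volume K ≠ ∞) : ∃ R : ℝ, 0 < R ∧ ∀ x ∈ K, ‖x - x₀‖ < R := by
  have hv : volume (ball (0 : E) (r / 2)) ≠ 0 := (measure_ball_pos _ _ (half_pos hr)).ne'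
  obtain ⟨N, hN⟩ := ENNReal.exists_nat_mul_gt hv hfin
  have hN0 : (0 : ℝ) < N := Nat.cast_pos.2 (Nat.pos_of_ne_zero (by rintro rfl; simp at hN))
  refine ⟨2 * r * N, by positivity, fun x hx ↦ ?_⟩
  by_contra! hfar
  let p (i : ℕ) : E := AffineMap.lineMap x₀ x (i / (2 * N) : ℝ)
  have hsub (i) (hi : i ∈ Finset.range N) : ball (p i) (r / 2) ⊆ K := by
    have hiN : (i : ℝ) < N := by exact_mod_cast Finset.mem_range.1 hi
    have hs : (i : ℝ) / (2 * N) ≤ 1 / 2 := by rw [div_le_iff₀ (by positivity)]; linarith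
    refine (ball_subset_ball ?_).trans
      (ball_lineMap_subset_of_convex hK hball hx (by positivity) (hs.trans_lt one_half_lt_one))
    nlinarith
  have hdisj : (Finset.range N : Set ℕ).PairwiseDisjoint fun i ↦ ball (p i) (r / 2) := by
    intro i _ j _ hij
    apply ball_disjoint_ball
    have hij' : (1 : ℝ) ≤ |(i : ℝ) - j| := by
      exact_mod_cast Int.one_le_abs (sub_ne_zero.2 (Nat.cast_injective.ne hij))
    rw [dist_lineMap_lineMap, Real.dist_eq, ← sub_div, abs_div,
      abs_of_pos (by positivity : (0 : ℝ) < 2 * N), dist_comm, dist_eq_norm, div_mul_eq_mul_div,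
      le_div_iff₀ (by positivity)]
    nlinarith [norm_nonneg (x - x₀)]
  refine hN.not_ge ?_
  calc N * volume (ball (0 : E) (r / 2))
      = ∑ i ∈ Finset.range N, volume (ball (p i) (r / 2)) := by
        simp [Measure.addHaar_ball_center]
    _ = volume (⋃ i ∈ Finset.range N, ball (p i) (r / 2)) :=
        (measure_biUnion_finset hdisj fun i _ ↦ measurableSet_ball).symm
    _ ≤ volume K := measure_mono (iUnion₂_subset hsub)

theorem exists_pos_measure_setOf_lt_ne_zero {α : Type*} [MeasurableSpace α] {μ : Measure α}
    {f : α → ℝ} (hf0 : ∀ x, 0 ≤ f x) (hint : Integrable f μ) (hpos : 0 < ∫ x, f x ∂μ) :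
    ∃ t : ℝ, 0 < t ∧ μ {x | t < f x} ≠ 0 := by
  by_contra! h
  refine ((integral_pos_iff_support_of_nonneg hf0 hint).1 hpos).ne' ?_
  refine measure_mono_null (fun x hx ↦ ?_)
    (measure_iUnion_null fun n : ℕ ↦ h (1 / ((n : ℝ) + 1)) (by positivity))
  exact mem_iUnion.2 (exists_nat_one_div_lt ((hf0 x).lt_of_ne' hx))

theorem interior_nonempty_of_convex_of_measure_ne_zero (hK : Convex ℝ K) (h0 : volume K ≠ 0) :
    (interior K).Nonempty := by
  contrapose! h0
  refine measure_mono_null ?_ (hK.addHaar_frontier volume)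
  rw [frontier, h0, sdiff_empty]
  exact subset_closure

theorem integrable_exp_neg_mul_norm [Nontrivial E] {c : ℝ} (hc : 0 < c) :
    Integrable fun x : E ↦ Real.exp (-c * ‖x‖) := by
  rw [integrable_fun_norm_addHaar volume (f := fun r ↦ Real.exp (-c * r))]
  have hdim : (-1 : ℝ) < (finrank ℝ E - 1 : ℕ) := by
    linarith [(Nat.cast_nonneg _ : (0 : ℝ) ≤ (finrank ℝ E - 1 : ℕ))]
  simpa using integrableOn_rpow_mul_exp_neg_mul_rpow hdim one_pos hc

end Decay

section LogConcave

variable {n : ℕ} {f : Eucl n → ℝ}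

theorem IsLogConcave.quasiconcaveOn (hf : IsLogConcave f) (hf0 : ∀ x, 0 ≤ f x) :
    QuasiconcaveOn ℝ univ f := by
  refine quasiconcaveOn_iff_min_le.2 ⟨convex_univ, fun x _ y _ a b ha hb hab ↦ ?_⟩
  rcases ha.eq_or_lt with rfl | ha
  · simp [show b = 1 by linarith]
  rcases hb.eq_or_lt with rfl | hb
  · simp [show a = 1 by linarith]
  obtain rfl : b = 1 - a := by linarith
  have hm : 0 ≤ min (f x) (f y) := le_min (hf0 x) (hf0 y)
  calc min (f x) (f y) = min (f x) (f y) ^ a * min (f x) (f y) ^ (1 - a) := by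
        rw [← Real.rpow_add_of_nonneg hm ha.le hb.le, add_sub_cancel, Real.rpow_one]
    _ ≤ f x ^ a * f y ^ (1 - a) :=
        mul_le_mul (Real.rpow_le_rpow hm (min_le_left _ _) ha.le)
          (Real.rpow_le_rpow hm (min_le_right _ _) hb.le) (Real.rpow_nonneg hm _)
          (Real.rpow_nonneg (hf0 x) _)
    _ ≤ f (a • x + (1 - a) • y) := hf x y a ha (by linarith)

theorem IsLogConcave.le_mul_exp_neg_inv (hf : IsLogConcave f) (hf0 : ∀ x, 0 ≤ f x) {t l : ℝ}
    (ht : 0 < t) (hl0 : 0 < l) (hl1 : l < 1) {x x₀ : Eucl n} (hx₀ : t ≤ f x₀)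
    (hle : f (l • x + (1 - l) • x₀) ≤ t * Real.exp (-1)) : f x ≤ t * Real.exp (-l⁻¹) := by
  have hpow : f x ^ l * t ^ (1 - l) ≤ (t * Real.exp (-l⁻¹)) ^ l * t ^ (1 - l) :=
    calc f x ^ l * t ^ (1 - l) ≤ f x ^ l * f x₀ ^ (1 - l) := by
          have := Real.rpow_nonneg (hf0 x) l
          gcongr
      _ ≤ t * Real.exp (-1) := (hf x x₀ l hl0 hl1).trans hle
      _ = (t * Real.exp (-l⁻¹)) ^ l * t ^ (1 - l) := by
          rw [Real.mul_rpow ht.le (Real.exp_pos _).le, ← Real.exp_mul, neg_mul,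
            inv_mul_cancel₀ hl0.ne', mul_right_comm, ← Real.rpow_add ht, add_sub_cancel,
            Real.rpow_one]
  exact (Real.rpow_le_rpow_iff (hf0 x) (by positivity) hl0).1
    (le_of_mul_le_mul_right hpow (Real.rpow_pos_of_pos ht _))

theorem IsLogConcave.exists_ball_lt (hf : IsLogConcave f) (hf0 : ∀ x, 0 ≤ f x)
    (hint : Integrable f) (hpos : 0 < ∫ x, f x) :
    ∃ t : ℝ, 0 < t ∧ ∃ x₀ r, 0 < r ∧ ball x₀ r ⊆ {x | t < f x} := by
  obtain ⟨t, ht, hvol⟩ := exists_pos_measure_setOf_lt_ne_zero hf0 hint hpos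
  have hconv : Convex ℝ {x | t < f x} := by simpa using (hf.quasiconcaveOn hf0).convex_gt t
  obtain ⟨x₀, hx₀⟩ := interior_nonempty_of_convex_of_measure_ne_zero hconv hvol
  obtain ⟨r, hr, hball⟩ := Metric.mem_nhds_iff.1 (mem_interior_iff_mem_nhds.1 hx₀)
  exact ⟨t, ht, x₀, r, hr, hball⟩

-- The superlevel set `{x | t / e < f x}` is convex of finite volume, hence bounded; outside a ball
-- containing it, log-concavity along the segments to `x₀` forces exponential decay.
theorem IsLogConcave.exists_le_mul_exp_of_lt_norm (hf : IsLogConcave f) (hf0 : ∀ x, 0 ≤ f x)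
    (hint : Integrable f) (hpos : 0 < ∫ x, f x) :
    ∃ t R : ℝ, ∃ x₀, 0 < t ∧ 0 < R ∧ ∀ x, R < ‖x - x₀‖ → f x ≤ t * Real.exp (-(‖x - x₀‖ / R)) := by
  obtain ⟨t, ht, x₀, r, hr, hball⟩ := hf.exists_ball_lt hf0 hint hpos
  set t' := t * Real.exp (-1)
  have ht' : 0 < t' := by positivity
  have htt' : t' ≤ t := mul_le_of_le_one_right ht.le (by simp)
  have hconv : Convex ℝ {x | t' < f x} := by simpa using (hf.quasiconcaveOn hf0).convex_gt t'
  obtain ⟨R, hR, hbdd⟩ := exists_forall_norm_sub_lt_of_convex hconv hr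
    (hball.trans fun x hx ↦ htt'.trans_lt hx) (hint.measure_gt_lt_top ht').ne
  refine ⟨t, R, x₀, ht, hR, fun x hx ↦ ?_⟩
  have hx0 : 0 < ‖x - x₀‖ := hR.trans hx
  set l := R / ‖x - x₀‖
  have hl0 : 0 < l := by positivity
  have hle : f (l • x + (1 - l) • x₀) ≤ t' := by
    by_contra! hlt
    refine (hbdd _ hlt).ne ?_
    rw [show l • x + (1 - l) • x₀ - x₀ = l • (x - x₀) by module, norm_smul,
      Real.norm_of_nonneg hl0.le, div_mul_cancel₀ _ hx0.ne']
  have hdecay := hf.le_mul_exp_neg_inv hf0 ht hl0 ((div_lt_one hx0).2 hx)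
    (hball (mem_ball_self hr)).le hle
  rwa [inv_div] at hdecay

theorem MemQ0.exists_le_mul_exp (hf : MemQ0 f) :
    ∃ C c : ℝ, 0 < C ∧ 0 < c ∧ ∀ x, f x ≤ C * Real.exp (-c * ‖x‖) := by
  obtain ⟨hf0, hlc, husc, hint, hpos⟩ := hf
  obtain ⟨t, R, x₀, ht, hR, hfar⟩ := hlc.exists_le_mul_exp_of_lt_norm hf0 hint hpos
  obtain ⟨a, -, ha⟩ := UpperSemicontinuousOn.exists_isMaxOn ⟨x₀, mem_closedBall_self hR.le⟩
    (isCompact_closedBall x₀ R) (husc.upperSemicontinuousOn _)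
  set C := max t (f a * Real.exp 1)
  have hcenter (x) : f x ≤ C * Real.exp (-(‖x - x₀‖ / R)) := by
    rcases le_or_gt ‖x - x₀‖ R with hx | hx
    · calc f x ≤ f a := ha (by simpa [dist_eq_norm] using hx)
        _ = f a * Real.exp 1 * Real.exp (-1) := by rw [mul_assoc, ← Real.exp_add]; simp
        _ ≤ C * Real.exp (-(‖x - x₀‖ / R)) := by
            gcongr
            · exact le_max_right _ _
            · exact (div_le_one hR).2 hx
    · exact (hfar x hx).trans (by gcongr; exact le_max_left _ _)
  refine ⟨C * Real.exp (‖x₀‖ / R), R⁻¹, by positivity, by positivity, fun x ↦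
    (hcenter x).trans ?_⟩
  rw [mul_assoc, ← Real.exp_add]
  gcongr
  calc -(‖x - x₀‖ / R) ≤ -((‖x‖ - ‖x₀‖) / R) := by gcongr; exact norm_sub_norm_le x x₀
    _ = ‖x₀‖ / R + -R⁻¹ * ‖x‖ := by ring

theorem MemQ0.bddAbove_range (hf : MemQ0 f) : BddAbove (range f) := by
  obtain ⟨C, c, hC, hc, hle⟩ := hf.exists_le_mul_exp
  refine ⟨C, forall_mem_range.2 fun x ↦ (hle x).trans (mul_le_of_le_one_right hC.le ?_)⟩
  rw [Real.exp_le_one_iff, neg_mul, neg_nonpos]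
  positivity

end LogConcave

/-! ### Milman's problem for functions -/

section Milman

variable {E : Type*} [NormedAddCommGroup E] [InnerProductSpace ℝ E] {f : E → ℝ}

theorem norm_le_norm_add_orthogonal (H : Submodule ℝ E) (y : H) (z : Hᗮ) :
    ‖y‖ ≤ ‖(y : E) + z‖ := by
  rw [← Submodule.norm_coe, ← abs_norm (y : E), ← abs_norm ((y : E) + z), ← sq_le_sq, sq, sq,
    norm_add_sq_eq_norm_sq_add_norm_sq_of_inner_eq_zero _ _ (z.2 y y.2)]
  exact le_add_of_nonneg_right (mul_self_nonneg _)

theorem bddAbove_range_add_orthogonal (hf : BddAbove (range f)) {H : Submodule ℝ E} (y : H) :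
    BddAbove (range fun z : Hᗮ ↦ f (y + z)) :=
  hf.mono (range_comp_subset_range (fun z : Hᗮ ↦ (y + z : E)) f)

theorem projSup_ofReal (hf : BddAbove (range f)) {H : Submodule ℝ E} (y : H) :
    projSup H (fun x ↦ ENNReal.ofReal (f x)) y = ENNReal.ofReal (⨆ z : Hᗮ, f (y + z)) :=
  (ENNReal.ofReal_mono.map_ciSup_of_continuousAt ENNReal.continuous_ofReal.continuousAt
    (bddAbove_range_add_orthogonal hf y)).symm

theorem quasiconcaveOn_ofReal (hf : QuasiconcaveOn ℝ univ f) :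
    QuasiconcaveOn ℝ univ fun x ↦ ENNReal.ofReal (f x) :=
  QuasiconcaveOn.monotone_comp (g := ENNReal.ofReal) ENNReal.ofReal_mono hf

variable [FiniteDimensional ℝ E] [MeasurableSpace E] [BorelSpace E]

theorem aemeasurable_iSup_add_orthogonal (hf0 : ∀ x, 0 ≤ f x) (hq : QuasiconcaveOn ℝ univ f)
    (hbdd : BddAbove (range f)) (H : Submodule ℝ E) :
    AEMeasurable fun y : H ↦ ⨆ z : Hᗮ, f (y + z) := by
  have hae := aemeasurable_of_quasiconcaveOn
    (quasiconcaveOn_projSup H (quasiconcaveOn_ofReal hq))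
  refine hae.ennreal_toReal.congr (ae_of_all _ fun y ↦ ?_)
  simp only [projSup_ofReal hbdd]
  rw [ENNReal.toReal_ofReal (Real.iSup_nonneg fun z ↦ hf0 _)]

theorem MemQ0.integrable_iSup_add_orthogonal {n : ℕ} {f : Eucl n → ℝ} (hf : MemQ0 f)
    {H : Submodule ℝ (Eucl n)} (hH : 0 < finrank ℝ H) :
    Integrable fun y : H ↦ ⨆ z : Hᗮ, f (y + z) := by
  obtain ⟨C, c, hC, hc, hle⟩ := hf.exists_le_mul_exp
  have : Nontrivial H := Module.nontrivial_of_finrank_pos hH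
  refine Integrable.mono' ((integrable_exp_neg_mul_norm hc).const_mul C)
    (aemeasurable_iSup_add_orthogonal hf.1 (hf.2.1.quasiconcaveOn hf.1)
      hf.bddAbove_range H).aestronglyMeasurable (ae_of_all _ fun y ↦ ?_)
  rw [Real.norm_of_nonneg (Real.iSup_nonneg fun z ↦ hf.1 _)]
  refine ciSup_le fun z ↦ (hle _).trans ?_
  gcongr C * Real.exp ?_
  exact mul_le_mul_of_nonpos_left (norm_le_norm_add_orthogonal H y z) (neg_nonpos.2 hc.le)

theorem ofReal_integral_le_lintegral_ofReal {α : Type*} [MeasurableSpace α] {μ : Measure α}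
    {g : α → ℝ} (hg : ∀ x, 0 ≤ g x) :
    ENNReal.ofReal (∫ x, g x ∂μ) ≤ ∫⁻ x, ENNReal.ofReal (g x) ∂μ := by
  by_cases hint : Integrable g μ
  · exact (ofReal_integral_eq_lintegral_ofReal hint (ae_of_all _ hg)).le
  · simp [integral_undef hint]

theorem integral_rpow_le_of_projection {f₁ f₂ : E → ℝ} {k i : ℕ} (hk : 0 < k)
    (hi : finrank ℝ E = k + i)
    (hf₁ : ∀ x, 0 ≤ f₁ x) (hq : QuasiconcaveOn ℝ univ f₁) (hb₁ : BddAbove (range f₁))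
    (hint₁ : ∀ H : Submodule ℝ E, finrank ℝ H = k → Integrable fun y : H ↦ ⨆ z : Hᗮ, f₁ (y + z))
    (hf₂ : ∀ x, 0 ≤ f₂ x) (hm : Measurable f₂) (hb₂ : BddAbove (range f₂)) (hint₂ : Integrable f₂)
    (hcond : ∀ H : Submodule ℝ E, finrank ℝ H = k →
      ∫ y : H, ⨆ z : Hᗮ, f₁ (y + z) ≤ ∫ y : H, f₂ y) :
    ∫ x, f₁ x ^ ((k + i : ℝ) / k) ≤ (⨆ x, f₂ x) ^ ((i : ℝ) / k) * ∫ x, f₂ x := by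
  have hsup : 0 ≤ ⨆ x, f₂ x := Real.iSup_nonneg hf₂
  have hlintegral (H : Submodule ℝ E) (hH : finrank ℝ H = k) :
      ∫⁻ y, projSup H (fun x ↦ ENNReal.ofReal (f₁ x)) y ≤ ∫⁻ y : H, ENNReal.ofReal (f₂ y) := by
    simp_rw [projSup_ofReal hb₁]
    rw [← ofReal_integral_eq_lintegral_ofReal (hint₁ H hH)
      (ae_of_all _ fun y ↦ Real.iSup_nonneg fun z ↦ hf₁ _)]
    exact (ENNReal.ofReal_le_ofReal (hcond H hH)).trans
      (ofReal_integral_le_lintegral_ofReal fun y : H ↦ hf₂ y)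
  have hle := lintegral_rpow_le_of_projSup hk hi (quasiconcaveOn_ofReal hq) hm.ennreal_ofReal
    ENNReal.ofReal_ne_top (fun x ↦ ENNReal.ofReal_le_ofReal (le_ciSup hb₂ x)) hlintegral
  rw [← ofReal_integral_eq_lintegral_ofReal hint₂ (ae_of_all _ hf₂),
    ENNReal.ofReal_rpow_of_nonneg hsup (by positivity), ← ENNReal.ofReal_mul (by positivity)] at hle
  refine (ENNReal.ofReal_le_ofReal_iff (mul_nonneg (by positivity) (integral_nonneg hf₂))).1 <|
    (ofReal_integral_le_lintegral_ofReal fun x ↦ Real.rpow_nonneg (hf₁ x) _).trans <|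
      (lintegral_mono fun x ↦ ?_).trans hle
  exact (ENNReal.ofReal_rpow_of_nonneg (hf₁ x) (by positivity)).ge

theorem functional_milman_general {n k : ℕ} (hn : finrank ℝ E = n) (hk : 0 < k) (hkn : k ≤ n)
    {f₁ f₂ : E → ℝ}
    (hf₁ : ∀ x, 0 ≤ f₁ x) (hq : QuasiconcaveOn ℝ univ f₁) (hb₁ : BddAbove (range f₁))
    (hint₁ : ∀ H : Submodule ℝ E, finrank ℝ H = k → Integrable fun y : H ↦ ⨆ z : Hᗮ, f₁ (y + z))
    (hf₂ : ∀ x, 0 ≤ f₂ x) (hm : Measurable f₂) (hb₂ : BddAbove (range f₂)) (hint₂ : Integrable f₂)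
    (hcond : ∀ H : Submodule ℝ E, finrank ℝ H = k →
      ∫ y : H, ⨆ z : Hᗮ, f₁ (y + z) ≤ ∫ y : H, f₂ y) :
    (∫ x, f₁ x ^ ((n : ℝ) / k)) ^ (1 / ((n : ℝ) / k)) ≤
      (∫ x, f₂ x) ^ ((k : ℝ) / n) * (⨆ x, f₂ x) ^ (((n : ℝ) - k) / n) := by
  obtain ⟨i, rfl⟩ := Nat.exists_eq_add_of_le hkn
  have hsup : 0 ≤ ⨆ x, f₂ x := Real.iSup_nonneg hf₂
  have hle := integral_rpow_le_of_projection hk hn hf₁ hq hb₁ hint₁ hf₂ hm hb₂ hint₂ hcond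
  rw [Nat.cast_add, one_div_div]
  calc (∫ x, f₁ x ^ ((k + i : ℝ) / k)) ^ (k / (k + i : ℝ))
      ≤ ((⨆ x, f₂ x) ^ ((i : ℝ) / k) * ∫ x, f₂ x) ^ (k / (k + i : ℝ)) :=
        Real.rpow_le_rpow (integral_nonneg fun x ↦ Real.rpow_nonneg (hf₁ x) _) hle (by positivity)
    _ = (∫ x, f₂ x) ^ (k / (k + i : ℝ)) * (⨆ x, f₂ x) ^ ((k + i - k : ℝ) / (k + i)) := by
        rw [Real.mul_rpow (by positivity) (integral_nonneg hf₂), ← Real.rpow_mul hsup, mul_comm]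
        congr 2
        field_simp
        ring

end Milman

/-- **The functional Milman problem** (Theorem 6.1): if `f₁, f₂ ∈ Q₀ⁿ` satisfy
`‖P_H f₁‖_{L¹(H)} ≤ ∫_H f₂ dλ_H` for every `k`-dimensional subspace `H`, then
`‖f₁‖_{n/k} ≤ ‖f₂‖₁^{k/n}·‖f₂‖_∞^{(n−k)/n}`. -/
theorem functional_milman (n k : ℕ) (hn : 2 ≤ n) (hk1 : 1 ≤ k) (hk2 : k ≤ n - 1)
    (f₁ f₂ : Eucl n → ℝ) (hf₁ : MemQ0 f₁) (hf₂ : MemQ0 f₂)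
    (hcond : ∀ H : Submodule ℝ (Eucl n), Module.finrank ℝ H = k →
      projL1 f₁ H ≤ sectL1 f₂ H) :
    lpNorm ((n : ℝ) / k) f₁ ≤
      (∫ x, f₂ x) ^ ((k : ℝ) / n) * supNorm f₂ ^ (((n : ℝ) - k) / n) :=
  functional_milman_general finrank_euclideanSpace_fin hk1 (by lia) hf₁.1
    (hf₁.2.1.quasiconcaveOn hf₁.1) hf₁.bddAbove_range
    (fun H hH ↦ hf₁.integrable_iSup_add_orthogonal (hk1.trans_eq hH.symm)) hf₂.1
    hf₂.2.2.1.measurable hf₂.bddAbove_range hf₂.2.2.2.1 hcond
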